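/- arXiv:1702.06479 — 3 statements merged into one kernel-verified Lean document; each statement's English description precedes it below -/
import Mathlib

section
/- Assume ε > 0 and that h is Lipschitz continuous, convex, and strictly increasing with h(0) = 0. Then there exist β ∈ (0,b] and a C² function f : [0,b] → ℝ such that: f''(x) + H(x, f(x), f'(x)) = 0 for all x ∈ [0,β]; f'(x) = r for all x ∈ [β,b]; f'(0) = 0; f'(x) < r for all x ∈ [0,β); and f is a (hence, by uniqueness, the unique) C² solution of HJB(ε). -/
open Set

/-- The Hamiltonian H(x,y,z) = (2/σ²)(m·z + ½σ²ε·z² − ϱ·y + h(x)). -/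
noncomputable def Hfun (σ ϱ m ε : ℝ) (h : ℝ → ℝ) (x y z : ℝ) : ℝ :=
  (2 / σ ^ 2) * (m * z + (1 / 2) * σ ^ 2 * ε * z ^ 2 - ϱ * y + h x)

/-- f (with first and second derivatives f', f'') is a C² solution of HJB(ε):
min{f'' + H(x,f,f'), f', r − f'} = 0 on (0,b), f'(0) = 0, f'(b) = r. -/
def IsHJBSolution (b σ ϱ r m ε : ℝ) (h f f' f'' : ℝ → ℝ) : Prop :=
  (∀ x ∈ Icc (0:ℝ) b, HasDerivWithinAt f (f' x) (Icc (0:ℝ) b) x) ∧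
  (∀ x ∈ Icc (0:ℝ) b, HasDerivWithinAt f' (f'' x) (Icc (0:ℝ) b) x) ∧
  ContinuousOn f'' (Icc (0:ℝ) b) ∧
  (∀ x ∈ Ioo (0:ℝ) b,
    min (min (f'' x + Hfun σ ϱ m ε h x (f x) (f' x)) (f' x)) (r - f' x) = 0) ∧
  f' 0 = 0 ∧ f' b = r

/-!
Solve the equation forward from `f(0) = y`, `f'(0) = 0`, with the slope truncated to `[0, r]`. For
very negative `y` the slope stays below `r`, for large `y` it crosses `r`, so by continuity some `y`
makes its maximum on `[0, b]` equal to `r`; the free boundary `β` is the first point where it is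
attained. Since `h` increases, a slope that becomes negative can never return to `0`, so the slope
stays in `[0, r]` on `[0, β]` and the truncation is inactive there.

If `β < b`, the slope has an interior maximum at `β`, hence `f''(β) = 0`, and `f` continues as a
`C²` function along its tangent line. The inequality `f'' + H ≥ 0` past `β` then says that the
secants of `h` from `β` to the right have slope at least `ϱ r`. Otherwise, `h` being convex, its
graph to the left of `β` lies above a line through `(β, h(β))` of slope less than `ϱ r`. Comparison
with that line forces `f'' < 0` just before `β`, contradicting that `f'` is maximal at `β`.
-/

open scoped Topology NNReal

theorem mul_sub_le_sub_of_hasDerivWithinAt {a b p : ℝ} {u u' : ℝ → ℝ}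
    (hu : ∀ x ∈ Icc a b, HasDerivWithinAt u (u' x) (Icc a b) x)
    (hp : ∀ x ∈ Icc a b, p ≤ u' x) {x : ℝ} (hx : x ∈ Icc a b) : p * (x - a) ≤ u x - u a := by
  have hd : ∀ t ∈ interior (Icc a b), HasDerivAt u (u' t) t := fun t ht =>
    (hu t (interior_subset ht)).hasDerivAt (mem_interior_iff_mem_nhds.1 ht)
  refine (convex_Icc a b).mul_sub_le_image_sub_of_le_deriv (HasDerivWithinAt.continuousOn hu)
    (fun t ht => (hd t ht).differentiableAt.differentiableWithinAt) (fun t ht => ?_)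
    a (left_mem_Icc.2 (hx.1.trans hx.2)) x hx hx.1
  rw [(hd t ht).deriv]
  exact hp t (interior_subset ht)

theorem sub_le_mul_sub_of_hasDerivWithinAt {a b q : ℝ} {u u' : ℝ → ℝ}
    (hu : ∀ x ∈ Icc a b, HasDerivWithinAt u (u' x) (Icc a b) x)
    (hq : ∀ x ∈ Icc a b, u' x ≤ q) {x : ℝ} (hx : x ∈ Icc a b) : u x - u a ≤ q * (x - a) := by
  have := mul_sub_le_sub_of_hasDerivWithinAt (fun t ht => (hu t ht).neg)
    (fun t ht => neg_le_neg (hq t ht)) hx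
  simp only [Pi.neg_apply] at this
  linarith

theorem add_div_mul_sub_le_of_convexOn {s : Set ℝ} {u : ℝ → ℝ} (hu : ConvexOn ℝ s u)
    {x y z : ℝ} (hx : x ∈ s) (hz : z ∈ s) (hxy : x < y) (hyz : y < z) :
    u y + (u z - u y) / (z - y) * (x - y) ≤ u x := by
  have hslope := hu.slope_mono_adjacent hx hz hxy hyz
  rw [div_le_iff₀ (sub_pos.2 hxy)] at hslope
  linarith

theorem exists_first_eq_of_continuousOn {a b r : ℝ} {g : ℝ → ℝ} (hg : ContinuousOn g (Icc a b))
    (hab : a ≤ b) (ha : g a < r) (hb : r ≤ g b) :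
    ∃ β ∈ Ioc a b, g β = r ∧ ∀ x ∈ Ico a β, g x < r := by
  have hcompact : IsCompact (Icc a b ∩ g ⁻¹' Ici r) :=
    isCompact_Icc.of_isClosed_subset
      (hg.preimage_isClosed_of_isClosed isClosed_Icc isClosed_Ici) inter_subset_left
  obtain ⟨β, ⟨hβ, hrβ⟩, hleast⟩ := hcompact.exists_isLeast ⟨b, right_mem_Icc.2 hab, hb⟩
  have hlt : ∀ x ∈ Ico a β, g x < r := fun x hx => by
    by_contra! hle
    exact hx.2.not_ge (hleast ⟨⟨hx.1, hx.2.le.trans hβ.2⟩, hle⟩)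
  obtain ⟨x, hx, hxr⟩ := intermediate_value_Icc hβ.1 (hg.mono (Icc_subset_Icc_right hβ.2))
    ⟨ha.le, hrβ⟩
  obtain rfl : x = β := hx.2.eq_of_not_lt fun h => (hlt x ⟨hx.1, h⟩).ne hxr
  exact ⟨x, ⟨hx.1.lt_of_ne (by rintro rfl; exact ha.ne hxr), hβ.2⟩, hxr, hlt⟩

theorem exists_forall_le_and_exists_eq_of_isPreconnected {X Y : Type*} [TopologicalSpace X]
    [TopologicalSpace Y] {s : Set X} {t : Set Y} (hs : IsPreconnected s) (ht : IsCompact t)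
    {φ : X × Y → ℝ} (hφ : ContinuousOn φ (s ×ˢ t)) {r : ℝ} {x₀ x₁ : X} (hx₀ : x₀ ∈ s) (hx₁ : x₁ ∈ s)
    (h₀ : ∀ y ∈ t, φ (x₀, y) ≤ r) (h₁ : ∃ y ∈ t, r ≤ φ (x₁, y)) :
    ∃ x ∈ s, (∀ y ∈ t, φ (x, y) ≤ r) ∧ ∃ y ∈ t, φ (x, y) = r := by
  have := isPreconnected_iff_preconnectedSpace.1 hs
  have := isCompact_iff_compactSpace.1 ht
  obtain ⟨y₁, hy₁, hry₁⟩ := h₁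
  have : Nonempty t := ⟨⟨y₁, hy₁⟩⟩
  have hψ : Continuous fun p : s × t => φ (p.1, p.2) :=
    hφ.comp_continuous (by fun_prop) fun p => ⟨p.1.2, p.2.2⟩
  have hcompact (x : s) : IsCompact (range fun y : t => φ (x, y)) :=
    isCompact_range (hψ.comp (.prodMk_right x))
  have hsup : Continuous fun x : s => sSup (range fun y : t => φ (x, y)) := by
    simpa only [image_univ] using isCompact_univ.continuous_sSup hψ
  obtain ⟨x, hx⟩ := mem_range_of_exists_le_of_exists_ge hsup
    ⟨⟨x₀, hx₀⟩, csSup_le (range_nonempty _) (forall_mem_range.2 fun y => h₀ y y.2)⟩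
    ⟨⟨x₁, hx₁⟩, hry₁.trans (le_csSup (hcompact _).bddAbove ⟨⟨y₁, hy₁⟩, rfl⟩)⟩
  obtain ⟨y, hy⟩ := (hcompact x).sSup_mem (range_nonempty _)
  exact ⟨x, x.2, fun y' hy' => hx ▸ le_csSup (hcompact x).bddAbove ⟨⟨y', hy'⟩, rfl⟩,
    y, y.2, hy.trans hx⟩

theorem nonpos_of_deriv_le_of_forall_le_right {a β k : ℝ} {g g' χ : ℝ → ℝ} (haβ : a < β)
    (hg : ∀ x ∈ Icc a β, HasDerivWithinAt g (g' x) (Icc a β) x)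
    (hmax : ∀ x ∈ Icc a β, g x ≤ g β) (hle : ∀ x ∈ Ioo a β, g' x ≤ χ x)
    (hχβ : χ β = 0) (hχ : HasDerivWithinAt χ k (Icc a β) β) : k ≤ 0 := by
  by_contra! hk
  have hev : ∀ᶠ x in 𝓝[<] β, χ x < 0 := by
    have hslope := (hasDerivWithinAt_iff_tendsto_slope' (by simp)).1
      (hχ.mono Ico_subset_Icc_self)
    rw [nhdsWithin_Ico_eq_nhdsLT haβ] at hslope
    filter_upwards [hslope.eventually (lt_mem_nhds hk), self_mem_nhdsWithin] with x hx hxβ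
    rw [slope_def_field, hχβ, sub_zero] at hx
    by_contra! hχx
    exact hx.not_ge (div_nonpos_of_nonneg_of_nonpos hχx (sub_nonpos.2 hxβ.le))
  obtain ⟨x₀, hx₀, hneg⟩ := (mem_nhdsLT_iff_exists_mem_Ico_Ioo_subset haβ).1 hev
  have hsub : Icc x₀ β ⊆ Icc a β := Icc_subset_Icc_left hx₀.1
  have hanti : StrictAntiOn g (Icc x₀ β) := by
    refine strictAntiOn_of_hasDerivWithinAt_neg (f' := g') (convex_Icc _ _)
      (fun x hx => (hg x (hsub hx)).continuousWithinAt.mono hsub) ?_ ?_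
    · exact fun x hx => (hg x (hsub (interior_subset hx))).mono (interior_subset.trans hsub)
    · rw [interior_Icc]
      exact fun x hx => (hle x ⟨hx₀.1.trans_lt hx.1, hx.2⟩).trans_lt (hneg hx)
  exact (hanti (left_mem_Icc.2 hx₀.2.le) (right_mem_Icc.2 hx₀.2.le) hx₀.2).not_ge
    (hmax x₀ ⟨hx₀.1, hx₀.2.le⟩)

section TangentExtension

variable {E : Type*} [NormedAddCommGroup E] [NormedSpace ℝ E]

/-- The function equal to `u` on `(-∞, β]` and continued past `β` by its tangent line there;
`u'` is the derivative of `u`. -/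
def tangentExtension (u u' : ℝ → E) (β x : ℝ) : E :=
  u (min x β) + (x - min x β) • u' β

theorem tangentExtension_of_le {u u' : ℝ → E} {β x : ℝ} (hx : x ≤ β) :
    tangentExtension u u' β x = u x := by
  simp [tangentExtension, hx]

theorem tangentExtension_of_ge {u u' : ℝ → E} {β x : ℝ} (hx : β ≤ x) :
    tangentExtension u u' β x = u β + (x - β) • u' β := by
  simp [tangentExtension, hx]

theorem hasDerivWithinAt_tangentExtension {u u' : ℝ → E} {a β x : ℝ} (haβ : a ≤ β)
    (hu : ∀ x ∈ Icc a β, HasDerivWithinAt u (u' x) (Icc a β) x) :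
    HasDerivWithinAt (tangentExtension u u' β) (u' (min x β)) (Ici a) x := by
  rw [← Icc_union_Ici_eq_Ici haβ]
  apply HasDerivWithinAt.union
  · by_cases hx : x ∈ Icc a β
    · rw [min_eq_left hx.2]
      exact (hu x hx).congr (fun t ht => tangentExtension_of_le ht.2)
        (tangentExtension_of_le hx.2)
    · exact HasFDerivWithinAt.of_notMem_closure (by rwa [closure_Icc])
  · by_cases hx : x ∈ Ici β
    · rw [min_eq_right hx]
      have hline : HasDerivAt (fun t => u β + (t - β) • u' β) (u' β) x := by
        simpa using (((hasDerivAt_id x).sub_const β).smul_const (u' β)).const_add (u β)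
      exact hline.hasDerivWithinAt.congr (fun t ht => tangentExtension_of_ge ht)
        (tangentExtension_of_ge hx)
    · exact HasFDerivWithinAt.of_notMem_closure (by rwa [closure_Ici])

end TangentExtension

section Flow

variable {E : Type*} [NormedAddCommGroup E] [NormedSpace ℝ E] [CompleteSpace E]

theorem exists_flow_of_lipschitzWith_of_norm_le {v : ℝ → E → E} {a b : ℝ} {K L : ℝ≥0}
    (hab : a ≤ b) (hK : ∀ t ∈ Icc a b, LipschitzWith K (v t))
    (hc : ∀ x, ContinuousOn (v · x) (Icc a b)) (hL : ∀ t ∈ Icc a b, ∀ x, ‖v t x‖ ≤ L)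
    {s : Set E} (hs : Bornology.IsBounded s) :
    ∃ α : E × ℝ → E,
      (∀ x ∈ s, α (x, a) = x ∧
        ∀ t ∈ Icc a b, HasDerivWithinAt (α ⟨x, ·⟩) (v t (α (x, t))) (Icc a b) t) ∧
      ContinuousOn α (s ×ˢ Icc a b) := by
  obtain ⟨R, hR, hsR⟩ := hs.subset_closedBall_lt 0 0
  lift R to ℝ≥0 using hR.le
  have hPL : IsPicardLindelof v (⟨a, left_mem_Icc.2 hab⟩ : Icc a b) 0
      (R + L * (b - a).toNNReal) R L K :=
    { lipschitzOnWith := fun t ht => (hK t ht).lipschitzOnWith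
      continuousOn := fun x _ => hc x
      norm_le := fun t ht x _ => hL t ht x
      mul_max_le := by simp [hab] }
  obtain ⟨α, hα, hαc⟩ := hPL.exists_forall_mem_closedBall_eq_hasDerivWithinAt_continuousOn
  exact ⟨α, fun x hx => hα x (hsR hx), hαc.mono (prod_mono_left hsR)⟩

theorem exists_flow_comp_of_lipschitzOnWith {v : ℝ → E → E} {a b : ℝ} {K : ℝ≥0} {B : Set E}
    {π : E → E} (hab : a ≤ b) (hB : IsCompact B) (hπ : LipschitzWith 1 π) (hπB : ∀ x, π x ∈ B)
    (hK : ∀ t ∈ Icc a b, LipschitzOnWith K (v t) B)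
    (hc : ∀ x ∈ B, ContinuousOn (v · x) (Icc a b)) {s : Set E} (hs : Bornology.IsBounded s) :
    ∃ α : E × ℝ → E,
      (∀ x ∈ s, α (x, a) = x ∧
        ∀ t ∈ Icc a b, HasDerivWithinAt (α ⟨x, ·⟩) (v t (π (α (x, t)))) (Icc a b) t) ∧
      ContinuousOn α (s ×ˢ Icc a b) := by
  obtain ⟨L, hL⟩ := (isCompact_Icc.prod hB).exists_bound_of_continuousOn
    (continuousOn_prod_of_continuousOn_lipschitzOnWith' (fun p => v p.1 p.2) K hK hc)
  refine exists_flow_of_lipschitzWith_of_norm_le (v := fun t x => v t (π x)) (K := K * 1)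
    (L := L.toNNReal) hab (fun t ht => ?_) (fun x => hc _ (hπB x))
    (fun t ht x => (hL (t, π x) ⟨ht, hπB x⟩).trans (Real.le_coe_toNNReal L)) hs
  exact lipschitzOnWith_univ.1 ((hK t ht).comp hπ.lipschitzOnWith fun x _ => hπB x)

end Flow

/-- `f` and `g` solve `f'' = F x (f, f')` with the slope truncated to `[0, r]`, that is `f' = π g`
and `g' = F x (f, π g)` on `[a, b]`, where `π` is the projection onto `[0, r]`. The unknown slope
`g` itself is not truncated, so the original equation holds wherever `g` stays in `[0, r]`. -/
structure IsTruncatedSolution (F : ℝ → ℝ × ℝ → ℝ) (a b : ℝ) {r : ℝ} (hr : 0 ≤ r)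
    (f g : ℝ → ℝ) : Prop where
  hasDerivWithinAt_fst : ∀ x ∈ Icc a b, HasDerivWithinAt f (projIcc 0 r hr (g x)) (Icc a b) x
  hasDerivWithinAt_snd : ∀ x ∈ Icc a b,
    HasDerivWithinAt g (F x (f x, projIcc 0 r hr (g x))) (Icc a b) x

namespace IsTruncatedSolution

variable {F : ℝ → ℝ × ℝ → ℝ} {a b r : ℝ} {hr : 0 ≤ r} {f g : ℝ → ℝ}

theorem fst_mem_Icc (h : IsTruncatedSolution F a b hr f g) {x : ℝ} (hx : x ∈ Icc a b) :
    f x ∈ Icc (f a) (f a + r * (b - a)) := by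
  have hlower := mul_sub_le_sub_of_hasDerivWithinAt h.hasDerivWithinAt_fst
    (fun t _ => (projIcc 0 r hr (g t)).2.1) hx
  have hupper := sub_le_mul_sub_of_hasDerivWithinAt h.hasDerivWithinAt_fst
    (fun t _ => (projIcc 0 r hr (g t)).2.2) hx
  have : r * (x - a) ≤ r * (b - a) := by gcongr; exact hx.2
  constructor <;> linarith

theorem snd_le_of_forall_nonpos (h : IsTruncatedSolution F a b hr f g)
    (hF : ∀ y, AntitoneOn (fun x => F x (y, 0)) (Icc a b)) {c d : ℝ} (hac : a ≤ c) (hcd : c ≤ d)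
    (hdb : d ≤ b) (hc : F c (f c, 0) ≤ 0) (hg : ∀ x ∈ Icc c d, g x ≤ 0) : g d ≤ g c := by
  have hsub : Icc c d ⊆ Icc a b := Icc_subset_Icc hac hdb
  have hproj : ∀ x ∈ Icc c d, (projIcc 0 r hr (g x) : ℝ) = 0 := fun x hx => by
    rw [projIcc_of_le_left hr (hg x hx)]
  have hfd : ∀ x ∈ Icc c d, HasDerivWithinAt f (projIcc 0 r hr (g x)) (Icc c d) x :=
    fun x hx => (h.hasDerivWithinAt_fst x (hsub hx)).mono hsub
  have hconst : ∀ x ∈ Icc c d, f x = f c := fun x hx => by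
    have hlower := mul_sub_le_sub_of_hasDerivWithinAt hfd (fun t ht => (hproj t ht).ge) hx
    have hupper := sub_le_mul_sub_of_hasDerivWithinAt hfd (fun t ht => (hproj t ht).le) hx
    linarith
  have hle : ∀ x ∈ Icc c d, F x (f x, projIcc 0 r hr (g x)) ≤ 0 := fun x hx => by
    rw [hproj x hx, hconst x hx]
    exact (hF (f c) (hsub (left_mem_Icc.2 hcd)) (hsub hx) hx.1).trans hc
  have := sub_le_mul_sub_of_hasDerivWithinAt
    (fun x hx => (h.hasDerivWithinAt_snd x (hsub hx)).mono hsub) hle (right_mem_Icc.2 hcd)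
  linarith

theorem snd_nonneg (h : IsTruncatedSolution F a b hr f g)
    (hF : ∀ y, AntitoneOn (fun x => F x (y, 0)) (Icc a b)) {β : ℝ} (hβ : β ∈ Icc a b)
    (ha : 0 ≤ g a) (hgβ : 0 ≤ g β) {x : ℝ} (hx : x ∈ Icc a β) : 0 ≤ g x := by
  have hβb : Icc a β ⊆ Icc a b := Icc_subset_Icc_right hβ.2
  have hg : ContinuousOn g (Icc a b) := HasDerivWithinAt.continuousOn h.hasDerivWithinAt_snd
  obtain ⟨x₁, hx₁, hmin⟩ := isCompact_Icc.exists_isMinOn ⟨x, hx⟩ (hg.mono hβb)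
  suffices 0 ≤ g x₁ from this.trans (hmin hx)
  by_contra! hneg
  have hax₁ : a < x₁ := hx₁.1.lt_of_ne fun e => (e ▸ hneg).not_ge ha
  have hx₁β : x₁ < β := hx₁.2.lt_of_ne fun e => (e ▸ hneg).not_ge hgβ
  have hcrit : F x₁ (f x₁, 0) = 0 := by
    have hd := (h.hasDerivWithinAt_snd x₁ (hβb hx₁)).hasDerivAt
      (Icc_mem_nhds hax₁ (hx₁β.trans_le hβ.2))
    rw [projIcc_of_le_left hr hneg.le] at hd
    exact (hmin.isLocalMin (Icc_mem_nhds hax₁ hx₁β)).hasDerivAt_eq_zero hd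
  obtain ⟨γ, hγ, hγ0, hltγ⟩ := exists_first_eq_of_continuousOn
    (hg.mono (Icc_subset_Icc hx₁.1 hβ.2)) hx₁β.le hneg hgβ
  have hnonpos : ∀ t ∈ Icc x₁ γ, g t ≤ 0 := fun t ht => by
    rcases ht.2.eq_or_lt with rfl | hlt
    exacts [hγ0.le, (hltγ t ⟨ht.1, hlt⟩).le]
  have := h.snd_le_of_forall_nonpos hF hx₁.1 hγ.1.le (hγ.2.trans hβ.2) hcrit.le hnonpos
  linarith

end IsTruncatedSolution

section Shooting

variable {F : ℝ → ℝ × ℝ → ℝ} {a b lo hi r : ℝ} {K : ℝ≥0}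

theorem exists_isTruncatedSolution_family (hab : a ≤ b) (hlohi : lo ≤ hi) (hr : 0 ≤ r)
    (hK : ∀ x ∈ Icc a b, LipschitzOnWith K (F x) (Icc lo (hi + r * (b - a)) ×ˢ Icc 0 r))
    (hc : ∀ p ∈ Icc lo (hi + r * (b - a)) ×ˢ Icc 0 r, ContinuousOn (F · p) (Icc a b)) :
    ∃ f g : ℝ → ℝ → ℝ,
      (∀ y ∈ Icc lo hi, IsTruncatedSolution F a b hr (f y) (g y) ∧ f y a = y ∧ g y a = 0) ∧
      ContinuousOn (fun p : ℝ × ℝ => g p.1 p.2) (Icc lo hi ×ˢ Icc a b) := by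
  have hrab : 0 ≤ r * (b - a) := mul_nonneg hr (sub_nonneg.2 hab)
  have hle : lo ≤ hi + r * (b - a) := by linarith
  have hproj : LipschitzWith 1 fun p : ℝ × ℝ =>
      ((projIcc lo _ hle p.1 : ℝ), (projIcc 0 r hr p.2 : ℝ)) := by
    have hclamp {c d : ℝ} (hcd : c ≤ d) : LipschitzWith 1 fun x => (projIcc c d hcd x : ℝ) := by
      simpa [Function.comp_def] using (LipschitzWith.subtype_val _).comp (LipschitzWith.projIcc hcd)
    simpa using ((hclamp hle).comp LipschitzWith.prod_fst).prodMk
      ((hclamp hr).comp LipschitzWith.prod_snd)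
  obtain ⟨α, hα, hαc⟩ := exists_flow_comp_of_lipschitzOnWith (v := fun x p => (p.2, F x p))
    hab (isCompact_Icc.prod isCompact_Icc) hproj
    (fun p => ⟨Subtype.coe_prop _, Subtype.coe_prop _⟩)
    (fun x hx => LipschitzWith.prod_snd.lipschitzOnWith.prodMk (hK x hx))
    (fun p hp => continuousOn_const.prodMk (hc p hp))
    (s := Icc lo hi ×ˢ {0}) ((Metric.isBounded_Icc lo hi).prod Bornology.isBounded_singleton)
  refine ⟨fun y x => (α ((y, 0), x)).1, fun y x => (α ((y, 0), x)).2, fun y hy => ?_, ?_⟩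
  · obtain ⟨hinit, hd⟩ := hα (y, 0) ⟨hy, rfl⟩
    have htrunc : IsTruncatedSolution (fun x p => F x ((projIcc lo _ hle p.1 : ℝ), p.2)) a b hr
        (fun x => (α ((y, 0), x)).1) (fun x => (α ((y, 0), x)).2) :=
      ⟨fun x hx => (hd x hx).fst, fun x hx => (hd x hx).snd⟩
    refine ⟨⟨htrunc.hasDerivWithinAt_fst, fun x hx => ?_⟩, by simp [hinit], by simp [hinit]⟩
    have hmem := htrunc.fst_mem_Icc hx
    have hd' := htrunc.hasDerivWithinAt_snd x hx
    simp only [hinit] at hmem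
    simpa only [projIcc_of_mem hle ⟨hy.1.trans hmem.1, hmem.2.trans (by gcongr; exact hy.2)⟩]
      using hd'
  · exact (hαc.comp (f := fun p : ℝ × ℝ => ((p.1, (0 : ℝ)), p.2)) (by fun_prop)
      fun p hp => ⟨⟨hp.1, rfl⟩, hp.2⟩).snd

theorem exists_isTruncatedSolution_forall_le_and_exists_eq (hab : a < b) (hlohi : lo ≤ hi)
    (hr : 0 ≤ r)
    (hK : ∀ x ∈ Icc a b, LipschitzOnWith K (F x) (Icc lo (hi + r * (b - a)) ×ˢ Icc 0 r))
    (hc : ∀ p ∈ Icc lo (hi + r * (b - a)) ×ˢ Icc 0 r, ContinuousOn (F · p) (Icc a b))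
    (hlo : ∀ x ∈ Icc a b, ∀ p ∈ Icc lo (lo + r * (b - a)) ×ˢ Icc 0 r, F x p ≤ r / (b - a))
    (hhi : ∀ x ∈ Icc a b, ∀ p ∈ Icc hi (hi + r * (b - a)) ×ˢ Icc 0 r, r / (b - a) ≤ F x p) :
    ∃ f g : ℝ → ℝ, IsTruncatedSolution F a b hr f g ∧ g a = 0 ∧
      (∀ x ∈ Icc a b, g x ≤ r) ∧ ∃ x ∈ Icc a b, g x = r := by
  obtain ⟨f, g, hfg, hgc⟩ := exists_isTruncatedSolution_family hab.le hlohi hr hK hc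
  have hlo_mem : lo ∈ Icc lo hi := left_mem_Icc.2 hlohi
  have hhi_mem : hi ∈ Icc lo hi := right_mem_Icc.2 hlohi
  have hbox : ∀ y ∈ Icc lo hi, ∀ x ∈ Icc a b,
      (f y x, (projIcc 0 r hr (g y x) : ℝ)) ∈ Icc y (y + r * (b - a)) ×ˢ Icc 0 r := by
    intro y hy x hx
    obtain ⟨hsol, hfa, -⟩ := hfg y hy
    have hmem := hsol.fst_mem_Icc hx
    rw [hfa] at hmem
    exact ⟨hmem, Subtype.coe_prop _⟩
  have hbelow : ∀ x ∈ Icc a b, g lo x ≤ r := fun x hx => by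
    have hslope := sub_le_mul_sub_of_hasDerivWithinAt (hfg lo hlo_mem).1.hasDerivWithinAt_snd
      (fun t ht => hlo t ht _ (hbox lo hlo_mem t ht)) hx
    rw [(hfg lo hlo_mem).2.2, sub_zero] at hslope
    calc g lo x ≤ r / (b - a) * (x - a) := hslope
      _ ≤ r / (b - a) * (b - a) := by gcongr; linarith [hx.2]
      _ = r := div_mul_cancel₀ r (sub_pos.2 hab).ne'
  have habove : r ≤ g hi b := by
    have hslope := mul_sub_le_sub_of_hasDerivWithinAt (hfg hi hhi_mem).1.hasDerivWithinAt_snd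
      (fun t ht => hhi t ht _ (hbox hi hhi_mem t ht)) (right_mem_Icc.2 hab.le)
    rwa [(hfg hi hhi_mem).2.2, sub_zero, div_mul_cancel₀ r (sub_pos.2 hab).ne'] at hslope
  obtain ⟨y, hy, hle, htouch⟩ := exists_forall_le_and_exists_eq_of_isPreconnected
    isPreconnected_Icc isCompact_Icc hgc hlo_mem hhi_mem hbelow ⟨b, right_mem_Icc.2 hab.le, habove⟩
  exact ⟨f y, g y, (hfg y hy).1, (hfg y hy).2.2, hle, htouch⟩

end Shooting

section Hamiltonian

variable {b σ ϱ r m ε : ℝ} {h : ℝ → ℝ}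

theorem hasDerivWithinAt_Hfun {f g : ℝ → ℝ} {s : Set ℝ} {x f' g' h' : ℝ}
    (hh : HasDerivWithinAt h h' s x) (hf : HasDerivWithinAt f f' s x)
    (hg : HasDerivWithinAt g g' s x) :
    HasDerivWithinAt (fun t => Hfun σ ϱ m ε h t (f t) (g t))
      (2 / σ ^ 2 * (m * g' + σ ^ 2 * ε * g x * g' - ϱ * f' + h')) s x := by
  refine (((((hg.const_mul m).add ((hg.pow 2).const_mul (1 / 2 * σ ^ 2 * ε))).sub
    (hf.const_mul ϱ)).add hh).const_mul (2 / σ ^ 2)).congr_deriv ?_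
  simp only [Nat.cast_ofNat, Nat.add_one_sub_one, pow_one]
  ring

theorem continuousOn_Hfun {X : Type*} [TopologicalSpace X] {u f g : X → ℝ} {s : Set X}
    (hu : ContinuousOn (fun p => h (u p)) s) (hf : ContinuousOn f s) (hg : ContinuousOn g s) :
    ContinuousOn (fun p => Hfun σ ϱ m ε h (u p) (f p) (g p)) s :=
  continuousOn_const.mul ((((continuousOn_const.mul hg).add
    (continuousOn_const.mul (hg.pow 2))).sub (continuousOn_const.mul hf)).add hu)

theorem Hfun_le_Hfun {k : ℝ → ℝ} {x x' y z : ℝ} (hle : h x ≤ k x') :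
    Hfun σ ϱ m ε h x y z ≤ Hfun σ ϱ m ε k x' y z := by
  unfold Hfun
  gcongr

theorem exists_lipschitzOnWith_Hfun (σ ϱ m ε : ℝ) (h : ℝ → ℝ) {s : Set (ℝ × ℝ)}
    (hs : Convex ℝ s) (hs' : IsCompact s) :
    ∃ K : ℝ≥0, ∀ x, LipschitzOnWith K (fun p => Hfun σ ϱ m ε h x p.1 p.2) s := by
  have hsmooth : ContDiffOn ℝ 1 (fun p : ℝ × ℝ => Hfun σ ϱ m ε 0 0 p.1 p.2) s := by
    unfold Hfun
    fun_prop
  obtain ⟨K, hK⟩ := hsmooth.exists_lipschitzOnWith one_ne_zero hs hs'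
  have hadd (x : ℝ) (p : ℝ × ℝ) : Hfun σ ϱ m ε h x p.1 p.2 =
      Hfun σ ϱ m ε 0 0 p.1 p.2 + 2 / σ ^ 2 * h x := by
    simp only [Hfun, Pi.zero_apply]
    ring
  refine ⟨K, fun x p hp q hq => ?_⟩
  simpa only [hadd, edist_add_right] using hK hp hq

theorem exists_abs_Hfun_add_le (σ ϱ m ε r : ℝ) (hh : ContinuousOn h (Icc 0 b)) :
    ∃ B, 0 ≤ B ∧ ∀ x ∈ Icc 0 b, ∀ y, ∀ z ∈ Icc 0 r,
      |Hfun σ ϱ m ε h x y z + 2 / σ ^ 2 * ϱ * y| ≤ B := by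
  have hcont : ContinuousOn (fun p : ℝ × ℝ => Hfun σ ϱ m ε h p.1 0 p.2)
      (Icc 0 b ×ˢ Icc 0 r) :=
    continuousOn_Hfun (hh.comp continuousOn_fst mapsTo_fst_prod) continuousOn_const
      continuousOn_snd
  obtain ⟨B, hB⟩ := (isCompact_Icc.prod isCompact_Icc).exists_bound_of_continuousOn hcont
  refine ⟨max B 0, le_max_right _ _, fun x hx y z hz => ?_⟩
  have hy : Hfun σ ϱ m ε h x y z + 2 / σ ^ 2 * ϱ * y = Hfun σ ϱ m ε h x 0 z := by
    simp only [Hfun]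
    ring
  rw [hy]
  exact (hB (x, z) ⟨hx, hz⟩).trans (le_max_left _ _)

theorem exists_isTruncatedSolution_Hfun (hb : 0 < b) (hσ : σ ≠ 0) (hϱ : 0 < ϱ) (hr : 0 ≤ r)
    (hh : ContinuousOn h (Icc 0 b)) :
    ∃ f g : ℝ → ℝ, IsTruncatedSolution (fun x p => -Hfun σ ϱ m ε h x p.1 p.2) 0 b hr f g ∧
      g 0 = 0 ∧ (∀ x ∈ Icc 0 b, g x ≤ r) ∧ ∃ x ∈ Icc 0 b, g x = r := by
  obtain ⟨B, hB0, hB⟩ := exists_abs_Hfun_add_le σ ϱ m ε r hh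
  set c := 2 / σ ^ 2 * ϱ
  have hc0 : 0 < c := by positivity
  set lo := (r / b - B) / c - r * b with hlo
  set hi := (r / b + B) / c
  have hclo : c * (lo + r * b) = r / b - B := by
    rw [hlo, sub_add_cancel, mul_div_cancel₀ _ hc0.ne']
  have hchi : c * hi = r / b + B := mul_div_cancel₀ _ hc0.ne'
  have hlohi : lo ≤ hi := by
    have : 0 ≤ r * b := by positivity
    have : (r / b - B) / c ≤ (r / b + B) / c := by gcongr; linarith
    linarith
  obtain ⟨K, hK⟩ := exists_lipschitzOnWith_Hfun σ ϱ m ε h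
    ((convex_Icc lo (hi + r * (b - 0))).prod (convex_Icc 0 r))
    (isCompact_Icc.prod isCompact_Icc)
  refine exists_isTruncatedSolution_forall_le_and_exists_eq (lo := lo) (hi := hi) hb hlohi hr
    (fun x _ => (hK x).neg) (fun p _ => (continuousOn_Hfun hh continuousOn_const
      continuousOn_const).neg) (fun x hx p hp => ?_) (fun x hx p hp => ?_)
  · have hbound := (abs_le.1 (hB x hx p.1 p.2 hp.2)).1
    have : c * p.1 ≤ c * (lo + r * b) := by
      gcongr
      simpa using hp.1.2
    rw [sub_zero]
    linarith
  · have hbound := (abs_le.1 (hB x hx p.1 p.2 hp.2)).2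
    have : c * hi ≤ c * p.1 := by
      gcongr
      exact hp.1.1
    rw [sub_zero]
    linarith

end Hamiltonian

/-- `f`, with derivative `g`, solves the free boundary problem for HJB(ε) with boundary `β`: the
equation `f'' + H(x, f, f') = 0` holds on `[0, β]`, the slope stays in `[0, r)` before first
reaching `r` at `β`, and if `β < b` then `f''(β) = 0`, the latter written through the equation. -/
structure IsFreeBoundarySolution (b σ ϱ r m ε : ℝ) (h : ℝ → ℝ) (β : ℝ) (f g : ℝ → ℝ) :
    Prop where
  mem_Ioc : β ∈ Ioc 0 b
  hasDerivWithinAt_fst : ∀ x ∈ Icc 0 β, HasDerivWithinAt f (g x) (Icc 0 β) x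
  hasDerivWithinAt_snd : ∀ x ∈ Icc 0 β,
    HasDerivWithinAt g (-Hfun σ ϱ m ε h x (f x) (g x)) (Icc 0 β) x
  snd_zero : g 0 = 0
  snd_nonneg : ∀ x ∈ Icc 0 β, 0 ≤ g x
  snd_lt : ∀ x ∈ Ico 0 β, g x < r
  snd_boundary : g β = r
  smooth_fit : β < b → Hfun σ ϱ m ε h β (f β) r = 0

section FreeBoundary

variable {b σ ϱ r m ε β : ℝ} {h : ℝ → ℝ}

theorem exists_isFreeBoundarySolution (hb : 0 < b) (hσ : σ ≠ 0) (hϱ : 0 < ϱ) (hr : 0 < r)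
    (hh : ContinuousOn h (Icc 0 b)) (hmono : MonotoneOn h (Icc 0 b)) :
    ∃ β f g, IsFreeBoundarySolution b σ ϱ r m ε h β f g := by
  obtain ⟨f, g, hsol, hg0, hgr, x₀, hx₀, hgx₀⟩ :=
    exists_isTruncatedSolution_Hfun (m := m) (ε := ε) hb hσ hϱ hr.le hh
  have hg : ContinuousOn g (Icc 0 b) := HasDerivWithinAt.continuousOn hsol.hasDerivWithinAt_snd
  obtain ⟨β, hβ, hgβ, hlt⟩ := exists_first_eq_of_continuousOn
    (hg.mono (Icc_subset_Icc_right hx₀.2)) hx₀.1 (hg0.trans_lt hr) hgx₀.ge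
  have hβb : β ≤ b := hβ.2.trans hx₀.2
  have hsub : Icc 0 β ⊆ Icc 0 b := Icc_subset_Icc_right hβb
  have hanti : ∀ y, AntitoneOn (fun x => -Hfun σ ϱ m ε h x y 0) (Icc 0 b) :=
    fun y x hx x' hx' hxx' => neg_le_neg (Hfun_le_Hfun (hmono hx hx' hxx'))
  have hnonneg : ∀ x ∈ Icc 0 β, 0 ≤ g x := fun x hx =>
    hsol.snd_nonneg hanti ⟨hβ.1.le, hβb⟩ hg0.ge (hr.le.trans_eq hgβ.symm) hx
  have hproj : ∀ x ∈ Icc 0 β, (projIcc 0 r hr.le (g x) : ℝ) = g x := fun x hx => by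
    rw [projIcc_of_mem hr.le ⟨hnonneg x hx, hgr x (hsub hx)⟩]
  refine ⟨β, f, g, ⟨hβ.1, hβb⟩, fun x hx => ?_, fun x hx => ?_, hg0, hnonneg, hlt, hgβ,
    fun hβb => ?_⟩
  · simpa only [hproj x hx] using (hsol.hasDerivWithinAt_fst x (hsub hx)).mono hsub
  · simpa only [hproj x hx] using (hsol.hasDerivWithinAt_snd x (hsub hx)).mono hsub
  · have hβ_mem : β ∈ Icc 0 β := right_mem_Icc.2 hβ.1.le
    have hnhds : Icc 0 b ∈ 𝓝 β := Icc_mem_nhds hβ.1 hβb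
    have hmax : IsMaxOn g (Icc 0 b) β := fun x hx => (hgr x hx).trans_eq hgβ.symm
    have hzero := (hmax.isLocalMax hnhds).hasDerivAt_eq_zero
      ((hsol.hasDerivWithinAt_snd β (hsub hβ_mem)).hasDerivAt hnhds)
    rw [hproj β hβ_mem, hgβ] at hzero
    exact neg_eq_zero.1 hzero

namespace IsFreeBoundarySolution

variable {f g : ℝ → ℝ}

theorem mul_sub_le_sub_of_convexOn (hsol : IsFreeBoundarySolution b σ ϱ r m ε h β f g)
    (hσ : σ ≠ 0) (hconv : ConvexOn ℝ (Icc 0 b) h) {x : ℝ} (hx : x ∈ Icc β b) :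
    ϱ * r * (x - β) ≤ h x - h β := by
  obtain ⟨hβ0, hβb⟩ := hsol.mem_Ioc
  rcases hx.1.eq_or_lt with rfl | hβx
  · simp
  set k := (h x - h β) / (x - β) with hk
  have hβ_mem : β ∈ Icc 0 β := right_mem_Icc.2 hβ0.le
  have hfit := hsol.smooth_fit (hβx.trans_le hx.2)
  have hsecant : ∀ t ∈ Ioo 0 β, h β + k * (t - β) ≤ h t := fun t ht =>
    add_div_mul_sub_le_of_convexOn hconv ⟨ht.1.le, ht.2.le.trans hβb⟩ ⟨hβ0.le.trans hx.1, hx.2⟩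
      ht.2 hβx
  have hg'β : HasDerivWithinAt g 0 (Icc 0 β) β := by
    simpa only [hsol.snd_boundary, hfit, neg_zero] using hsol.hasDerivWithinAt_snd β hβ_mem
  have hline : HasDerivWithinAt (fun t => h β + k * (t - β)) k (Icc 0 β) β := by
    simpa using ((((hasDerivAt_id β).sub_const β).const_mul k).const_add (h β)).hasDerivWithinAt
  -- `h` may have a kink at `β`; its secant line through `β` and `x` does not.
  have hχ := (hasDerivWithinAt_Hfun (σ := σ) (ϱ := ϱ) (m := m) (ε := ε) hline
    (hsol.hasDerivWithinAt_fst β hβ_mem) hg'β).neg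
  have hnonpos := nonpos_of_deriv_le_of_forall_le_right hβ0 hsol.hasDerivWithinAt_snd
    (fun t ht => ?_) (fun t ht => ?_) ?_ hχ
  · rw [hsol.snd_boundary] at hnonpos
    have hc : 0 < 2 / σ ^ 2 := by positivity
    have : ϱ * r ≤ k := by
      linarith [nonneg_of_mul_nonneg_right (neg_nonpos.1 hnonpos) hc]
    rwa [hk, le_div_iff₀ (sub_pos.2 hβx)] at this
  · rw [hsol.snd_boundary]
    rcases ht.2.eq_or_lt with rfl | hlt
    exacts [hsol.snd_boundary.le, (hsol.snd_lt t ⟨ht.1, hlt⟩).le]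
  · exact neg_le_neg (Hfun_le_Hfun (hsecant t ht))
  · simpa [Hfun, hsol.snd_boundary] using hfit

theorem Hfun_add_mul_sub_nonneg (hsol : IsFreeBoundarySolution b σ ϱ r m ε h β f g)
    (hσ : σ ≠ 0) (hconv : ConvexOn ℝ (Icc 0 b) h) {x : ℝ} (hx : x ∈ Ioc β b) :
    0 ≤ Hfun σ ϱ m ε h x (f β + (x - β) * r) r := by
  have hslope := hsol.mul_sub_le_sub_of_convexOn hσ hconv (Ioc_subset_Icc_self hx)
  calc 0 ≤ 2 / σ ^ 2 * (h x - h β - ϱ * r * (x - β)) := by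
        have := sub_nonneg.2 hslope
        positivity
    _ = Hfun σ ϱ m ε h β (f β) r + 2 / σ ^ 2 * (h x - h β - ϱ * r * (x - β)) := by
        rw [hsol.smooth_fit (hx.1.trans_le hx.2), zero_add]
    _ = Hfun σ ϱ m ε h x (f β + (x - β) * r) r := by
        simp only [Hfun]
        ring

theorem hasDerivWithinAt_snd_min (hsol : IsFreeBoundarySolution b σ ϱ r m ε h β f g) {x : ℝ}
    (hx : x ∈ Icc 0 b) :
    HasDerivWithinAt (fun t => g (min t β))
      (-Hfun σ ϱ m ε h (min x β) (f (min x β)) (g (min x β))) (Icc 0 b) x := by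
  obtain ⟨hβ0, hβb⟩ := hsol.mem_Ioc
  have hext : ∀ t ∈ Icc 0 b, g (min t β) =
      tangentExtension g (fun x => -Hfun σ ϱ m ε h x (f x) (g x)) β t := fun t ht => by
    rcases hβb.eq_or_lt with rfl | hβb
    · rw [min_eq_left ht.2, tangentExtension_of_le ht.2]
    · simp [tangentExtension, hsol.snd_boundary, hsol.smooth_fit hβb]
  exact ((hasDerivWithinAt_tangentExtension hβ0.le hsol.hasDerivWithinAt_snd).mono
    Icc_subset_Ici_self).congr hext (hext x hx)

theorem isHJBSolution (hsol : IsFreeBoundarySolution b σ ϱ r m ε h β f g) (hσ : σ ≠ 0)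
    (hr : 0 ≤ r) (hh : ContinuousOn h (Icc 0 b)) (hconv : ConvexOn ℝ (Icc 0 b) h) :
    IsHJBSolution b σ ϱ r m ε h (tangentExtension f g β) (fun x => g (min x β))
      (fun x => -Hfun σ ϱ m ε h (min x β) (f (min x β)) (g (min x β))) := by
  obtain ⟨hβ0, hβb⟩ := hsol.mem_Ioc
  have hmin : MapsTo (min · β) (Icc 0 b) (Icc 0 β) := fun x hx =>
    ⟨le_min hx.1 hβ0.le, min_le_right x β⟩
  have hcomp {u : ℝ → ℝ} (hu : ContinuousOn u (Icc 0 β)) :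
      ContinuousOn (fun x => u (min x β)) (Icc 0 b) :=
    hu.comp (by fun_prop) hmin
  refine ⟨fun x _ => ?_, fun x hx => hsol.hasDerivWithinAt_snd_min hx, ?_, fun x hx => ?_, ?_, ?_⟩
  · exact (hasDerivWithinAt_tangentExtension hβ0.le hsol.hasDerivWithinAt_fst).mono
      Icc_subset_Ici_self
  · exact (continuousOn_Hfun (hcomp (hh.mono (Icc_subset_Icc_right hβb)))
      (hcomp (HasDerivWithinAt.continuousOn hsol.hasDerivWithinAt_fst))
      (hcomp (HasDerivWithinAt.continuousOn hsol.hasDerivWithinAt_snd))).neg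
  · beta_reduce
    rcases le_or_gt x β with hxβ | hβx
    · have hle : g x ≤ r := by
        rcases hxβ.eq_or_lt with rfl | hlt
        exacts [hsol.snd_boundary.le, (hsol.snd_lt x ⟨hx.1.le, hlt⟩).le]
      rw [tangentExtension_of_le hxβ, min_eq_left hxβ, neg_add_cancel,
        min_eq_left (hsol.snd_nonneg x ⟨hx.1.le, hxβ⟩), min_eq_left (sub_nonneg.2 hle)]
    · rw [tangentExtension_of_ge hβx.le, min_eq_right hβx.le, hsol.snd_boundary, smul_eq_mul,
        hsol.smooth_fit (hβx.trans hx.2), neg_zero, zero_add, sub_self]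
      exact min_eq_right (le_min (hsol.Hfun_add_mul_sub_nonneg hσ hconv ⟨hβx, hx.2.le⟩) hr)
  · simpa only [min_eq_left hβ0.le] using hsol.snd_zero
  · simpa only [min_eq_right hβb] using hsol.snd_boundary

end IsFreeBoundarySolution

end FreeBoundary

theorem stmt9_general (b σ ϱ r m ε : ℝ) (hb : 0 < b) (hσ : σ ≠ 0) (hϱ : 0 < ϱ) (hr : 0 < r)
    (h : ℝ → ℝ) (hcont : ContinuousOn h (Icc 0 b)) (hconv : ConvexOn ℝ (Icc 0 b) h)
    (hmono : MonotoneOn h (Icc 0 b)) :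
    ∃ β ∈ Ioc (0 : ℝ) b, ∃ f f' f'' : ℝ → ℝ,
      (∀ x ∈ Icc 0 β, f'' x + Hfun σ ϱ m ε h x (f x) (f' x) = 0) ∧
      (∀ x ∈ Icc β b, f' x = r) ∧
      f' 0 = 0 ∧
      (∀ x ∈ Ico 0 β, f' x < r) ∧
      IsHJBSolution b σ ϱ r m ε h f f' f'' := by
  obtain ⟨β, f, g, hsol⟩ := exists_isFreeBoundarySolution (m := m) (ε := ε) hb hσ hϱ hr hcont hmono
  have hHJB := hsol.isHJBSolution hσ hr.le hcont hconv
  refine ⟨β, hsol.mem_Ioc, _, _, _, fun x hx => ?_, fun x hx => ?_, ?_, fun x hx => ?_,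
    hHJB⟩
  · simp only [min_eq_left hx.2, tangentExtension_of_le hx.2, neg_add_cancel]
  · simpa only [min_eq_right hx.1] using hsol.snd_boundary
  · simpa only [min_eq_left hsol.mem_Ioc.1.le] using hsol.snd_zero
  · simpa only [min_eq_left hx.2.le] using hsol.snd_lt x hx

/-- Assume ε > 0 and that h is Lipschitz continuous, convex, and
strictly increasing with h(0) = 0. Then there exist β ∈ (0,b] and a C² function
f : [0,b] → ℝ such that: f'' + H(x,f,f') = 0 on [0,β]; f' = r on [β,b]; f'(0) = 0;
f' < r on [0,β); and f is a C² solution of HJB(ε). -/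
theorem stmt9 (b σ ϱ r m ε : ℝ) (hb : 0 < b) (hσ : 0 < σ) (hϱ : 0 < ϱ) (hr : 0 < r)
    (hε : 0 < ε) (h : ℝ → ℝ)
    (hLip : ∃ K : NNReal, LipschitzOnWith K h (Icc (0:ℝ) b))
    (hconv : ConvexOn ℝ (Icc (0:ℝ) b) h)
    (hmono : StrictMonoOn h (Icc (0:ℝ) b)) (h0 : h 0 = 0) :
    ∃ β ∈ Ioc (0:ℝ) b, ∃ f f' f'' : ℝ → ℝ,
      (∀ x ∈ Icc (0:ℝ) β, f'' x + Hfun σ ϱ m ε h x (f x) (f' x) = 0) ∧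
      (∀ x ∈ Icc β b, f' x = r) ∧
      f' 0 = 0 ∧
      (∀ x ∈ Ico (0:ℝ) β, f' x < r) ∧
      IsHJBSolution b σ ϱ r m ε h f f' f'' :=
  stmt9_general b σ ϱ r m ε hb hσ.ne' hϱ hr h hLip.choose_spec.continuousOn hconv hmono.monotoneOn
end

section
/- Let 0 < ε₂ < ε₁, and let f₁ and f₂ be C² solutions of HJB(ε₁) and HJB(ε₂), respectively. Then for every x ∈ [0,b], f₂(x) < f₁(x) ≤ f₂(x) + (ε₁·σ²·r²/(2·ε₂·ϱ))·(ε₁ − ε₂). In particular, for each fixed x the map ε ↦ f_ε(x) is strictly increasing and continuous on (0,∞). -/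
open Set

/-!
Everything follows from a comparison principle for `min {f'' + H(x, f, f'), f', r - f'} = 0`, with
`H` strictly decreasing in the value and Lipschitz in value and gradient.

*Weak comparison.* Once the gradient constraints of a subsolution `ψ` are made strict, `f - ψ`
attains its minimum at an interior point where the differential inequalities apply, and the decay
of `H` in the value forbids a negative minimum.

*Strict comparison.* If `f` touches a strict subsolution `ψ` at `x`, then `f' x = ψ' x`. The
second-derivative test excludes `0 < f' x < r`. If `f' x = 0`, one-sided uniqueness for the
differential inequality makes the contact spread to the right up to the end point where `f' = r`,
which is absurd; the case `f' x = r` is the mirror image.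

Since `H_ε₁ = H_ε₂ + (ε₁ - ε₂) z²`, the solution `f₂` is a strict subsolution for `ε₁`, and since
`z² ≤ r²`, the function `f₁ - σ² r² / (2ϱ) (ε₁ - ε₂)` is a subsolution for `ε₂`.
-/

open Filter Topology

section Calculus

theorem add_sub_mem_Icc {a b x : ℝ} (hx : x ∈ Icc a b) : a + b - x ∈ Icc a b :=
  ⟨by linarith [hx.2], by linarith [hx.1]⟩

theorem add_sub_mem_Ioo {a b x : ℝ} (hx : x ∈ Ioo a b) : a + b - x ∈ Ioo a b :=
  ⟨by linarith [hx.2], by linarith [hx.1]⟩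

theorem exists_forall_le_add_const {X : Type*} [TopologicalSpace X] {s : Set X} {f g : X → ℝ}
    (hs : IsCompact s) (hg : ContinuousOn g s) (hf : ContinuousOn f s) :
    ∃ q, ∀ x ∈ s, g x ≤ f x + q := by
  obtain ⟨q, hq⟩ := hs.bddAbove_image (hg.sub hf)
  exact ⟨q, fun x hx => sub_le_iff_le_add'.1 (hq (mem_image_of_mem _ hx))⟩

theorem mul_sub_nonneg_of_isMinOn_Icc {a b x y c : ℝ} {u : ℝ → ℝ}
    (hmin : IsMinOn u (Icc a b) x) (hu : HasDerivWithinAt u c (Icc a b) x)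
    (hx : x ∈ Icc a b) (hy : y ∈ Icc a b) : 0 ≤ c * (y - x) := by
  have hcone : y - x ∈ posTangentConeAt (Icc a b) x :=
    sub_mem_posTangentConeAt_of_segment_subset ((convex_Icc a b).segment_subset hx hy)
  simpa [mul_comm] using hmin.localize.hasFDerivWithinAt_nonneg hu.hasFDerivWithinAt hcone

theorem second_deriv_nonneg_of_isLocalMin {x c : ℝ} {u u' : ℝ → ℝ} (hmin : IsLocalMin u x)
    (hu : ∀ᶠ y in 𝓝 x, HasDerivAt u (u' y) y) (hu' : HasDerivAt u' c x) : 0 ≤ c := by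
  have hderiv : deriv u =ᶠ[𝓝 x] u' := hu.mono fun y hy => hy.deriv
  have hderiv2 : deriv (deriv u) x = c := by rw [hderiv.deriv_eq, hu'.deriv]
  by_contra! hc
  have hmax : IsLocalMax u x := isLocalMax_of_deriv_deriv_neg (hderiv2.trans_lt hc)
    hmin.deriv_eq_zero hu.self_of_nhds.continuousAt
  have hconst : u =ᶠ[𝓝 x] fun _ => u x := by
    filter_upwards [hmin, hmax] with y hle hge using le_antisymm hge hle
  have hzero : deriv (deriv u) x = 0 := by simp [hconst.deriv.deriv_eq]
  linarith

/-- `f` is a C² function on `[a, b]` with first and second derivatives `f'` and `f''`, one-sided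
at the end points. -/
structure IsC2On (a b : ℝ) (f f' f'' : ℝ → ℝ) : Prop where
  hasDeriv : ∀ x ∈ Icc a b, HasDerivWithinAt f (f' x) (Icc a b) x
  hasDeriv' : ∀ x ∈ Icc a b, HasDerivWithinAt f' (f'' x) (Icc a b) x
  continuousOn_deriv2 : ContinuousOn f'' (Icc a b)

namespace IsC2On

variable {a b : ℝ} {f f' f'' g g' g'' : ℝ → ℝ}

theorem continuousOn (hf : IsC2On a b f f' f'') : ContinuousOn f (Icc a b) :=
  fun x hx => (hf.hasDeriv x hx).continuousWithinAt

theorem continuousOn_deriv (hf : IsC2On a b f f' f'') : ContinuousOn f' (Icc a b) :=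
  fun x hx => (hf.hasDeriv' x hx).continuousWithinAt

theorem mono {p q : ℝ} (hf : IsC2On a b f f' f'') (hsub : Icc p q ⊆ Icc a b) :
    IsC2On p q f f' f'' where
  hasDeriv x hx := (hf.hasDeriv x (hsub hx)).mono hsub
  hasDeriv' x hx := (hf.hasDeriv' x (hsub hx)).mono hsub
  continuousOn_deriv2 := hf.continuousOn_deriv2.mono hsub

theorem sub (hf : IsC2On a b f f' f'') (hg : IsC2On a b g g' g'') :
    IsC2On a b (fun x => f x - g x) (fun x => f' x - g' x) (fun x => f'' x - g'' x) where
  hasDeriv x hx := (hf.hasDeriv x hx).sub (hg.hasDeriv x hx)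
  hasDeriv' x hx := (hf.hasDeriv' x hx).sub (hg.hasDeriv' x hx)
  continuousOn_deriv2 := hf.continuousOn_deriv2.sub hg.continuousOn_deriv2

theorem const_mul (c : ℝ) (hf : IsC2On a b f f' f'') :
    IsC2On a b (fun x => c * f x) (fun x => c * f' x) (fun x => c * f'' x) where
  hasDeriv x hx := (hf.hasDeriv x hx).const_mul c
  hasDeriv' x hx := (hf.hasDeriv' x hx).const_mul c
  continuousOn_deriv2 := hf.continuousOn_deriv2.const_mul c

theorem add_affine (p q : ℝ) (hf : IsC2On a b f f' f'') :
    IsC2On a b (fun x => f x + (p * x + q)) (fun x => f' x + p) f'' where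
  hasDeriv x hx := (hf.hasDeriv x hx).add
    ((((hasDerivWithinAt_id x _).const_mul p).add_const q).congr_deriv (mul_one p))
  hasDeriv' x hx := (hf.hasDeriv' x hx).add_const p
  continuousOn_deriv2 := hf.continuousOn_deriv2

theorem comp_reflect (hf : IsC2On a b f f' f'') :
    IsC2On a b (fun x => f (a + b - x)) (fun x => -f' (a + b - x)) (fun x => f'' (a + b - x)) := by
  have hmaps : MapsTo (fun x => a + b - x) (Icc a b) (Icc a b) := fun _ => add_sub_mem_Icc
  have hrefl (x : ℝ) : HasDerivWithinAt (fun x => a + b - x) (-1) (Icc a b) x :=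
    (hasDerivWithinAt_id x _).const_sub (a + b)
  refine ⟨fun x hx => ?_, fun x hx => ?_, ?_⟩
  · exact ((hf.hasDeriv _ (hmaps hx)).comp x (hrefl x) hmaps).congr_deriv (by ring)
  · exact ((hf.hasDeriv' _ (hmaps hx)).comp x (hrefl x) hmaps).neg.congr_deriv (by ring)
  · exact hf.continuousOn_deriv2.comp (fun x _ => (hrefl x).continuousWithinAt) hmaps

theorem second_deriv_nonneg_of_isMinOn {x : ℝ} (hf : IsC2On a b f f' f'') (hx : x ∈ Ioo a b)
    (hmin : IsMinOn f (Icc a b) x) : f' x = 0 ∧ 0 ≤ f'' x := by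
  have hmem : Icc a b ∈ 𝓝 x := Icc_mem_nhds hx.1 hx.2
  have hloc : IsLocalMin f x := hmin.isLocalMin hmem
  have hderiv : ∀ᶠ y in 𝓝 x, HasDerivAt f (f' y) y := by
    filter_upwards [Ioo_mem_nhds hx.1 hx.2] with y hy
    exact (hf.hasDeriv y (Ioo_subset_Icc_self hy)).hasDerivAt (Icc_mem_nhds hy.1 hy.2)
  exact ⟨hloc.hasDerivAt_eq_zero hderiv.self_of_nhds, second_deriv_nonneg_of_isLocalMin hloc hderiv
    ((hf.hasDeriv' x (Ioo_subset_Icc_self hx)).hasDerivAt hmem)⟩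

/-- A fencing argument keeps `f'` below a multiple of `f`, and Gronwall's inequality concludes. -/
theorem eqOn_zero_of_deriv2_le {L : ℝ} (hf : IsC2On a b f f' f'')
    (hnonneg : ∀ x ∈ Icc a b, 0 ≤ f x) (hfa : f a = 0) (hfa' : f' a = 0)
    (hle : ∀ x ∈ Ioo a b, 0 < f' x → f'' x ≤ L * (f x + f' x)) :
    EqOn f 0 (Icc a b) := by
  have hright {u : ℝ → ℝ} {c x : ℝ} (hx : x ∈ Ico a b)
      (hu : HasDerivWithinAt u c (Icc a b) x) : HasDerivWithinAt u c (Ici x) x :=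
    hu.mono_of_mem_nhdsWithin (Icc_mem_nhdsGE_of_mem hx)
  set K := |L| + 1 with hK
  have hfence : ∀ δ > 0, ∀ x ∈ Icc a b, f' x ≤ K * f x + δ := by
    intro δ hδ
    refine image_le_of_deriv_right_lt_deriv_boundary' (B' := fun x => K * f' x)
      hf.continuousOn_deriv (fun x hx => hright hx (hf.hasDeriv' x (Ico_subset_Icc_self hx)))
      (by simp [hfa, hfa', hδ.le]) ((hf.continuousOn.const_mul K).add continuousOn_const)
      (fun x hx => ((hright hx (hf.hasDeriv x (Ico_subset_Icc_self hx))).const_mul K).add_const δ)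
      fun x hx hcontact => ?_
    have hfx : 0 ≤ f x := hnonneg x (Ico_subset_Icc_self hx)
    have hLfx : |L| * f x < f' x := by rw [hcontact, hK]; linarith
    have hf'x : 0 < f' x := (by positivity : 0 ≤ |L| * f x).trans_lt hLfx
    have hax : a < x := hx.1.lt_of_ne fun heq => by subst heq; linarith
    calc f'' x ≤ L * (f x + f' x) := hle x ⟨hax, hx.2⟩ hf'x
      _ ≤ |L| * (f x + f' x) := mul_le_mul_of_nonneg_right (le_abs_self L) (by positivity)
      _ < K * f' x := by rw [hK]; linarith
  have hderiv_le : ∀ x ∈ Icc a b, f' x ≤ K * f x := fun x hx =>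
    le_of_forall_pos_le_add fun δ hδ => hfence δ hδ x hx
  intro x hx
  refine le_antisymm ?_ (hnonneg x hx)
  calc f x ≤ gronwallBound 0 K 0 (x - a) :=
        le_gronwallBound_of_liminf_deriv_right_le hf.continuousOn
          (fun y hy _ hr =>
            (hright hy (hf.hasDeriv y (Ico_subset_Icc_self hy))).liminf_right_slope_le hr)
          hfa.le (fun y hy => by simpa using hderiv_le y (Ico_subset_Icc_self hy)) x hx
    _ = 0 := gronwallBound_ε0_δ0 K _

end IsC2On

end Calculus

/-- Structural conditions on a Hamiltonian `H x y z` for gradients `z ∈ [0, r]`: it decreases in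
the value `y` at rate at least `κ > 0` and is `L`-Lipschitz in `(y, z)`, uniformly in `x`. -/
structure IsProperHamiltonian (r κ L : ℝ) (H : ℝ → ℝ → ℝ → ℝ) : Prop where
  rate_pos : 0 < κ
  mul_sub_le : ∀ x, ∀ z ∈ Icc 0 r, ∀ y y', y ≤ y' → κ * (y' - y) ≤ H x y z - H x y' z
  abs_sub_le : ∀ x y y', ∀ z ∈ Icc 0 r, ∀ z' ∈ Icc 0 r,
    |H x y z - H x y' z'| ≤ L * (|y - y'| + |z - z'|)

theorem IsProperHamiltonian.add_sub_le {r κ L : ℝ} {H : ℝ → ℝ → ℝ → ℝ}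
    (hH : IsProperHamiltonian r κ L H) (x y : ℝ) {d z z' : ℝ} (hz : z ∈ Icc 0 r)
    (hz' : z' ∈ Icc 0 r) (hd : 0 ≤ d) :
    H x y z + κ * d - L * |z - z'| ≤ H x (y - d) z' := by
  have hvalue := hH.mul_sub_le x z' hz' (y - d) y (sub_le_self y hd)
  have hgradient := (le_abs_self _).trans (hH.abs_sub_le x y y z hz z' hz')
  rw [sub_self, abs_zero, zero_add] at hgradient
  rw [sub_sub_cancel] at hvalue
  linarith

/-- C² subsolutions of `min {f'' + H(x, f, f'), f', r - f'} = 0` on `(a, b)`. -/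
structure IsSubsolution (a b r : ℝ) (H : ℝ → ℝ → ℝ → ℝ) (ψ ψ' ψ'' : ℝ → ℝ) : Prop
    extends IsC2On a b ψ ψ' ψ'' where
  deriv_mem : ∀ x ∈ Icc a b, ψ' x ∈ Icc 0 r
  nonneg : ∀ x ∈ Ioo a b, 0 ≤ ψ'' x + H x (ψ x) (ψ' x)

/-- Subsolutions for which the differential inequality is strict wherever neither gradient
constraint is active. -/
structure IsStrictSubsolution (a b r : ℝ) (H : ℝ → ℝ → ℝ → ℝ) (ψ ψ' ψ'' : ℝ → ℝ) : Prop
    extends IsSubsolution a b r H ψ ψ' ψ'' where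
  pos : ∀ x ∈ Ioo a b, ψ' x ∈ Ioo 0 r → 0 < ψ'' x + H x (ψ x) (ψ' x)

/-- C² supersolutions of `min {f'' + H(x, f, f'), f', r - f'} = 0` on `(a, b)` with boundary
conditions `f' a = 0` and `f' b = r`. As the minimum only has to be nonpositive, the gradient is
not confined to `[0, r]`. -/
structure IsSupersolution (a b r : ℝ) (H : ℝ → ℝ → ℝ → ℝ) (f f' f'' : ℝ → ℝ) : Prop
    extends IsC2On a b f f' f'' where
  nonpos : ∀ x ∈ Ioo a b, f' x ∈ Ioo 0 r → f'' x + H x (f x) (f' x) ≤ 0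
  deriv_left : f' a ≤ 0
  deriv_right : r ≤ f' b

section Comparison

variable {a b r κ L : ℝ} {H : ℝ → ℝ → ℝ → ℝ} {f f' f'' ψ ψ' ψ'' : ℝ → ℝ}

theorem IsSubsolution.le_of_deriv_mem_Ioo (hψ : IsSubsolution a b r H ψ ψ' ψ'')
    (hψ' : ∀ x ∈ Icc a b, ψ' x ∈ Ioo 0 r) (hf : IsSupersolution a b r H f f' f'')
    (hH : IsProperHamiltonian r κ L H) (hab : a < b) : ∀ x ∈ Icc a b, ψ x ≤ f x := by
  have hu := hf.sub hψ.toIsC2On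
  have ha : a ∈ Icc a b := left_mem_Icc.2 hab.le
  have hb : b ∈ Icc a b := right_mem_Icc.2 hab.le
  obtain ⟨x₀, hx₀, hmin⟩ := isCompact_Icc.exists_isMinOn ⟨a, ha⟩ hu.continuousOn
  suffices hle : ψ x₀ ≤ f x₀ from fun x hx => by
    have := isMinOn_iff.1 hmin x hx
    linarith
  have hfirst {y : ℝ} (hy : y ∈ Icc a b) : 0 ≤ (f' x₀ - ψ' x₀) * (y - x₀) :=
    mul_sub_nonneg_of_isMinOn_Icc hmin (hu.hasDeriv x₀ hx₀) hx₀ hy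
  have hax₀ : a < x₀ := hx₀.1.lt_of_ne fun heq => by
    subst heq
    nlinarith [hfirst hb, hf.deriv_left, (hψ' a ha).1]
  have hx₀b : x₀ < b := hx₀.2.lt_of_ne fun heq => by
    subst heq
    nlinarith [hfirst ha, hf.deriv_right, (hψ' x₀ hb).2]
  obtain ⟨hderiv, hderiv2⟩ := hu.second_deriv_nonneg_of_isMinOn ⟨hax₀, hx₀b⟩ hmin
  rw [sub_eq_zero] at hderiv
  by_contra! hlt
  have hdrop := hH.mul_sub_le x₀ (ψ' x₀) (hψ.deriv_mem x₀ hx₀) (f x₀) (ψ x₀) hlt.le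
  have hgap : 0 < κ * (ψ x₀ - f x₀) := mul_pos hH.rate_pos (sub_pos.2 hlt)
  have hsub := hψ.nonneg x₀ ⟨hax₀, hx₀b⟩
  have hsup := hf.nonpos x₀ ⟨hax₀, hx₀b⟩ (hderiv ▸ hψ' x₀ hx₀)
  rw [hderiv] at hsup
  linarith

/-- Moving a subsolution towards a very negative function of slope `r / 2` makes its gradient
constraints strict; the rate `κ` pays for the error. -/
theorem IsSubsolution.exists_sub_mul (hψ : IsSubsolution a b r H ψ ψ' ψ'')
    (hH : IsProperHamiltonian r κ L H) (hr : 0 < r) :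
    ∃ q, ∀ t ∈ Ioo (0 : ℝ) 1,
      IsSubsolution a b r H (fun x => ψ x - t * (ψ x + (-(r / 2) * x + q)))
        (fun x => ψ' x - t * (ψ' x + -(r / 2))) (fun x => ψ'' x - t * ψ'' x) ∧
      ∀ x ∈ Icc a b, ψ' x - t * (ψ' x + -(r / 2)) ∈ Ioo 0 r := by
  have hd (q : ℝ) := hψ.toIsC2On.add_affine (-(r / 2)) q
  obtain ⟨q, hq⟩ : ∃ q, ∀ x ∈ Icc a b,
      (|ψ'' x| + |L| * r) / κ ≤ ψ x + (-(r / 2) * x + q) := by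
    obtain ⟨q, hq⟩ := exists_forall_le_add_const isCompact_Icc
      ((hψ.continuousOn_deriv2.abs.add continuousOn_const).div_const κ) (hd 0).continuousOn
    exact ⟨q, fun x hx => (hq x hx).trans_eq (by ring)⟩
  refine ⟨q, fun t ht => ?_⟩
  have hmem : ∀ x ∈ Icc a b, ψ' x - t * (ψ' x + -(r / 2)) ∈ Ioo 0 r := fun x hx => by
    obtain ⟨hlow, hhigh⟩ := hψ.deriv_mem x hx
    constructor <;> nlinarith [ht.1, ht.2]
  refine ⟨⟨hψ.toIsC2On.sub ((hd q).const_mul t),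
    fun x hx => Ioo_subset_Icc_self (hmem x hx), fun x hx => ?_⟩, hmem⟩
  have hx' : x ∈ Icc a b := Ioo_subset_Icc_self hx
  have hψ' := hψ.deriv_mem x hx'
  set d := ψ x + (-(r / 2) * x + q)
  have hd0 : 0 ≤ d := le_trans (div_nonneg (by positivity) hH.rate_pos.le) (hq x hx')
  have hpay : t * (ψ'' x + |L| * r) ≤ κ * (t * d) := by
    have hqd : |ψ'' x| + |L| * r ≤ d * κ := (div_le_iff₀ hH.rate_pos).1 (hq x hx')
    calc t * (ψ'' x + |L| * r) ≤ t * (d * κ) :=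
          mul_le_mul_of_nonneg_left (by linarith [le_abs_self (ψ'' x)]) ht.1.le
      _ = κ * (t * d) := by ring
  have hcost : L * |ψ' x - (ψ' x - t * (ψ' x + -(r / 2)))| ≤ t * (|L| * r) := by
    have hdist : |ψ' x + -(r / 2)| ≤ r := abs_le.2 ⟨by linarith [hψ'.1], by linarith [hψ'.2]⟩
    rw [sub_sub_cancel, abs_mul, abs_of_pos ht.1]
    calc L * (t * |ψ' x + -(r / 2)|) ≤ |L| * (t * r) :=
          mul_le_mul (le_abs_self L) (mul_le_mul_of_nonneg_left hdist ht.1.le)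
            (mul_nonneg ht.1.le (abs_nonneg _)) (abs_nonneg L)
      _ = t * (|L| * r) := by ring
  have hH_lower := hH.add_sub_le x (ψ x) hψ' (Ioo_subset_Icc_self (hmem x hx'))
    (mul_nonneg ht.1.le hd0)
  linarith [hψ.nonneg x hx]

theorem IsSubsolution.le (hψ : IsSubsolution a b r H ψ ψ' ψ'')
    (hf : IsSupersolution a b r H f f' f'') (hH : IsProperHamiltonian r κ L H) (hab : a < b)
    (hr : 0 < r) {x : ℝ} (hx : x ∈ Icc a b) : ψ x ≤ f x := by
  obtain ⟨q, hq⟩ := hψ.exists_sub_mul hH hr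
  have hlim : Tendsto (fun t => ψ x - t * (ψ x + (-(r / 2) * x + q))) (𝓝[>] 0) (𝓝 (ψ x)) := by
    refine (Continuous.tendsto' (by fun_prop) 0 _ ?_).mono_left nhdsWithin_le_nhds
    simp
  refine le_of_tendsto hlim ?_
  filter_upwards [Ioo_mem_nhdsGT zero_lt_one] with t ht
  exact (hq t ht).1.le_of_deriv_mem_Ioo (hq t ht).2 hf hH hab x hx

theorem IsSubsolution.isMinOn_sub_of_contact (hψ : IsSubsolution a b r H ψ ψ' ψ'')
    (hf : IsSupersolution a b r H f f' f'') (hH : IsProperHamiltonian r κ L H) (hab : a < b)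
    (hr : 0 < r) {x : ℝ} (hcontact : f x = ψ x) : IsMinOn (fun y => f y - ψ y) (Icc a b) x := by
  refine isMinOn_iff.2 fun y hy => ?_
  rw [hcontact, sub_self, sub_nonneg]
  exact hψ.le hf hH hab hr hy

theorem IsSubsolution.deriv_eq_of_contact (hψ : IsSubsolution a b r H ψ ψ' ψ'')
    (hf : IsSupersolution a b r H f f' f'') (hH : IsProperHamiltonian r κ L H) (hab : a < b)
    (hr : 0 < r) {x : ℝ} (hx : x ∈ Icc a b) (hcontact : f x = ψ x) : f' x = ψ' x := by
  have hu := hf.sub hψ.toIsC2On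
  have hmin := hψ.isMinOn_sub_of_contact hf hH hab hr hcontact
  have hfirst {y : ℝ} (hy : y ∈ Icc a b) : 0 ≤ (f' x - ψ' x) * (y - x) :=
    mul_sub_nonneg_of_isMinOn_Icc hmin (hu.hasDeriv x hx) hx hy
  obtain ⟨hlow, hhigh⟩ := hψ.deriv_mem x hx
  rcases hx.1.eq_or_lt with rfl | hax
  · have := nonneg_of_mul_nonneg_left (hfirst (right_mem_Icc.2 hab.le)) (sub_pos.2 hab)
    linarith [hf.deriv_left]
  rcases hx.2.eq_or_lt with rfl | hxb
  · have := nonpos_of_mul_nonneg_left (hfirst (left_mem_Icc.2 hab.le)) (sub_neg.2 hab)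
    linarith [hf.deriv_right]
  exact sub_eq_zero.1 (hu.second_deriv_nonneg_of_isMinOn ⟨hax, hxb⟩ hmin).1

theorem IsStrictSubsolution.deriv_notMem_Ioo_of_contact (hψ : IsStrictSubsolution a b r H ψ ψ' ψ'')
    (hf : IsSupersolution a b r H f f' f'') (hH : IsProperHamiltonian r κ L H) (hab : a < b)
    (hr : 0 < r) {x : ℝ} (hx : x ∈ Icc a b) (hcontact : f x = ψ x) : f' x ∉ Ioo 0 r := by
  intro hmem
  have hax : a < x := hx.1.lt_of_ne fun heq => by
    subst heq
    exact hmem.1.not_ge hf.deriv_left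
  have hxb : x < b := hx.2.lt_of_ne fun heq => by
    subst heq
    exact hmem.2.not_ge hf.deriv_right
  have hderiv := hψ.toIsSubsolution.deriv_eq_of_contact hf hH hab hr hx hcontact
  have hderiv2 := ((hf.sub hψ.toIsC2On).second_deriv_nonneg_of_isMinOn ⟨hax, hxb⟩
    (hψ.toIsSubsolution.isMinOn_sub_of_contact hf hH hab hr hcontact)).2
  have hsup := hf.nonpos x ⟨hax, hxb⟩ hmem
  have hsub := hψ.pos x ⟨hax, hxb⟩ (hderiv ▸ hmem)
  rw [hcontact, hderiv] at hsup
  linarith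

theorem IsSubsolution.eventually_eq_nhdsGT_of_contact (hψ : IsSubsolution a b r H ψ ψ' ψ'')
    (hf : IsSupersolution a b r H f f' f'') (hH : IsProperHamiltonian r κ L H) (hr : 0 < r)
    {x : ℝ} (hx : x ∈ Ico a b) (hcontact : f x = ψ x) (hlt : f' x < r) :
    ∀ᶠ y in 𝓝[>] x, f y = ψ y ∧ f' y < r := by
  have hab : a < b := hx.1.trans_lt hx.2
  have hIcc : Icc a b ∈ 𝓝[≥] x := Icc_mem_nhdsGE_of_mem hx
  have hev : ∀ᶠ y in 𝓝[≥] x, y ∈ Icc a b ∧ f' y < r :=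
    (eventually_mem_set.2 hIcc).and (((hf.continuousOn_deriv x
      (Ico_subset_Icc_self hx)).mono_of_mem_nhdsWithin hIcc).tendsto.eventually_lt_const hlt)
  obtain ⟨q, hxq, hq⟩ := mem_nhdsGE_iff_exists_Icc_subset.1 hev
  have hsub : Icc x q ⊆ Icc a b := fun y hy => (hq hy).1
  have hle : ∀ y ∈ Icc x q, 0 ≤ f y - ψ y := fun y hy =>
    sub_nonneg.2 (hψ.le hf hH hab hr (hsub hy))
  have hderiv : f' x = ψ' x := hψ.deriv_eq_of_contact hf hH hab hr (Ico_subset_Icc_self hx) hcontact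
  have heq := ((hf.sub hψ.toIsC2On).mono hsub).eqOn_zero_of_deriv2_le (L := L) hle
    (sub_eq_zero.2 hcontact) (sub_eq_zero.2 hderiv) fun y hy hincr => by
      have hy' : y ∈ Icc x q := Ioo_subset_Icc_self hy
      have hyab : y ∈ Ioo a b := ⟨hx.1.trans_lt hy.1, hy.2.trans_le (hsub ⟨hxq.le, le_rfl⟩).2⟩
      have hψ' := hψ.deriv_mem y (hsub hy')
      have hf' : f' y ∈ Ioo 0 r := ⟨by linarith [hψ'.1], (hq hy').2⟩
      have hlip := (neg_le_abs _).trans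
        (hH.abs_sub_le y (f y) (ψ y) (f' y) (Ioo_subset_Icc_self hf') (ψ' y) hψ')
      rw [abs_of_nonneg (hle y hy'), abs_of_pos hincr] at hlip
      linarith [hf.nonpos y hyab hf', hψ.nonneg y hyab]
  filter_upwards [Ioo_mem_nhdsGT hxq] with y hy
  have hy' : y ∈ Icc x q := Ioo_subset_Icc_self hy
  exact ⟨sub_eq_zero.1 (heq hy'), (hq hy').2⟩

theorem IsStrictSubsolution.deriv_ne_zero_of_contact (hψ : IsStrictSubsolution a b r H ψ ψ' ψ'')
    (hf : IsSupersolution a b r H f f' f'') (hH : IsProperHamiltonian r κ L H) (hab : a < b)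
    (hr : 0 < r) {x : ℝ} (hx : x ∈ Icc a b) (hcontact : f x = ψ x) : f' x ≠ 0 := by
  intro hzero
  have hsub := hψ.toIsSubsolution
  have hclosed : IsClosed ({y | f y - ψ y = 0 ∧ f' y = 0} ∩ Icc x b) := by
    have hcont := ((hf.sub hψ.toIsC2On).continuousOn.prodMk hf.continuousOn_deriv).mono
      (Icc_subset_Icc_left hx.1)
    have := hcont.preimage_isClosed_of_isClosed isClosed_Icc (isClosed_singleton (x := (0, 0)))
    simpa [preimage, inter_comm, ofPred_and] using this
  have hspread : Icc x b ⊆ {y | f y - ψ y = 0 ∧ f' y = 0} := by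
    refine hclosed.Icc_subset_of_forall_mem_nhdsWithin ⟨sub_eq_zero.2 hcontact, hzero⟩ ?_
    rintro y ⟨⟨hy, hy'⟩, hyx, hyb⟩
    have hyab : y ∈ Ico a b := ⟨hx.1.trans hyx, hyb⟩
    filter_upwards [Ioo_mem_nhdsGT hyb, hsub.eventually_eq_nhdsGT_of_contact hf hH hr hyab
      (sub_eq_zero.1 hy) (hy'.trans_lt hr)] with z hz ⟨hz_contact, hz_lt⟩
    have hzab : z ∈ Icc a b := ⟨hyab.1.trans hz.1.le, hz.2.le⟩
    have hz_nonneg : 0 ≤ f' z := by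
      rw [hsub.deriv_eq_of_contact hf hH hab hr hzab hz_contact]
      exact (hψ.deriv_mem z hzab).1
    refine ⟨sub_eq_zero.2 hz_contact, hz_nonneg.eq_of_not_lt' fun hpos => ?_⟩
    exact hψ.deriv_notMem_Ioo_of_contact hf hH hab hr hzab hz_contact ⟨hpos, hz_lt⟩
  have hb : f' b = 0 := (hspread (right_mem_Icc.2 hx.2)).2
  linarith [hf.deriv_right]

end Comparison

section Reflection

variable {a b r κ L : ℝ} {H : ℝ → ℝ → ℝ → ℝ} {f f' f'' ψ ψ' ψ'' : ℝ → ℝ}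

/-- The Hamiltonian of the equation satisfied by `x ↦ f (a + b - x) + r * x` when `f` solves the
equation for `H`. This symmetry exchanges the constraints `0 ≤ f'` and `f' ≤ r`. -/
def reflectHamiltonian (a b r : ℝ) (H : ℝ → ℝ → ℝ → ℝ) (x y z : ℝ) : ℝ :=
  H (a + b - x) (y - r * x) (r - z)

theorem IsProperHamiltonian.reflect (hH : IsProperHamiltonian r κ L H) :
    IsProperHamiltonian r κ L (reflectHamiltonian a b r H) where
  rate_pos := hH.rate_pos
  mul_sub_le x z hz y y' hy := by
    simpa [reflectHamiltonian] using hH.mul_sub_le (a + b - x) (r - z)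
      (sub_mem_Icc_zero_iff_right.2 hz) (y - r * x) (y' - r * x) (sub_le_sub_right hy _)
  abs_sub_le x y y' z hz z' hz' := by
    simpa [reflectHamiltonian, abs_sub_comm z' z] using hH.abs_sub_le (a + b - x) (y - r * x)
      (y' - r * x) (r - z) (sub_mem_Icc_zero_iff_right.2 hz) (r - z')
      (sub_mem_Icc_zero_iff_right.2 hz')

theorem IsC2On.reflect (r : ℝ) (hf : IsC2On a b f f' f'') :
    IsC2On a b (fun x => f (a + b - x) + r * x) (fun x => r - f' (a + b - x))
      (fun x => f'' (a + b - x)) := by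
  simpa [neg_add_eq_sub] using hf.comp_reflect.add_affine r 0

theorem IsStrictSubsolution.reflect (hψ : IsStrictSubsolution a b r H ψ ψ' ψ'') :
    IsStrictSubsolution a b r (reflectHamiltonian a b r H) (fun x => ψ (a + b - x) + r * x)
      (fun x => r - ψ' (a + b - x)) (fun x => ψ'' (a + b - x)) where
  toIsC2On := hψ.toIsC2On.reflect r
  deriv_mem x hx := sub_mem_Icc_zero_iff_right.2 (hψ.deriv_mem _ (add_sub_mem_Icc hx))
  nonneg x hx := by
    simpa [reflectHamiltonian] using hψ.nonneg _ (add_sub_mem_Ioo hx)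
  pos x hx hmem := by
    simpa [reflectHamiltonian] using
      hψ.pos _ (add_sub_mem_Ioo hx) (sub_mem_Ioo_zero_iff_right.1 hmem)

theorem IsSupersolution.reflect (hf : IsSupersolution a b r H f f' f'') :
    IsSupersolution a b r (reflectHamiltonian a b r H) (fun x => f (a + b - x) + r * x)
      (fun x => r - f' (a + b - x)) (fun x => f'' (a + b - x)) where
  toIsC2On := hf.toIsC2On.reflect r
  nonpos x hx hmem := by
    simpa [reflectHamiltonian] using
      hf.nonpos _ (add_sub_mem_Ioo hx) (sub_mem_Ioo_zero_iff_right.1 hmem)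
  deriv_left := by simpa using hf.deriv_right
  deriv_right := by simpa using hf.deriv_left

theorem IsStrictSubsolution.deriv_ne_of_contact (hψ : IsStrictSubsolution a b r H ψ ψ' ψ'')
    (hf : IsSupersolution a b r H f f' f'') (hH : IsProperHamiltonian r κ L H) (hab : a < b)
    (hr : 0 < r) {x : ℝ} (hx : x ∈ Icc a b) (hcontact : f x = ψ x) : f' x ≠ r := by
  have hreflect := hψ.reflect.deriv_ne_zero_of_contact hf.reflect hH.reflect hab hr
    (add_sub_mem_Icc hx) (by simpa only [sub_sub_cancel, add_left_inj] using hcontact)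
  rw [sub_sub_cancel] at hreflect
  exact (sub_ne_zero.1 hreflect).symm

theorem IsStrictSubsolution.lt (hψ : IsStrictSubsolution a b r H ψ ψ' ψ'')
    (hf : IsSupersolution a b r H f f' f'') (hH : IsProperHamiltonian r κ L H) (hab : a < b)
    (hr : 0 < r) {x : ℝ} (hx : x ∈ Icc a b) : ψ x < f x := by
  refine (hψ.toIsSubsolution.le hf hH hab hr hx).lt_of_ne' fun hcontact => ?_
  obtain ⟨hlow, hhigh⟩ : f' x ∈ Icc 0 r := by
    rw [hψ.toIsSubsolution.deriv_eq_of_contact hf hH hab hr hx hcontact]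
    exact hψ.deriv_mem x hx
  exact hψ.deriv_notMem_Ioo_of_contact hf hH hab hr hx hcontact
    ⟨hlow.lt_of_ne' (hψ.deriv_ne_zero_of_contact hf hH hab hr hx hcontact),
      hhigh.lt_of_ne (hψ.deriv_ne_of_contact hf hH hab hr hx hcontact)⟩

end Reflection

section HJB

variable {b σ ϱ r m ε ε₁ ε₂ : ℝ} {h f f' f'' : ℝ → ℝ}

theorem isProperHamiltonian_Hfun (hσ : 0 < σ) (hϱ : 0 < ϱ) :
    IsProperHamiltonian r (2 / σ ^ 2 * ϱ) (2 / σ ^ 2 * ϱ + 2 / σ ^ 2 * |m| + |ε| * (2 * r))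
      (Hfun σ ϱ m ε h) where
  rate_pos := by positivity
  mul_sub_le x z _ y y' _ := by
    unfold Hfun
    linarith
  abs_sub_le x y y' z hz z' hz' := by
    set k := 2 / σ ^ 2 with hk
    have hk0 : 0 ≤ k := by positivity
    have hsplit : Hfun σ ϱ m ε h x y z - Hfun σ ϱ m ε h x y' z' =
        (k * m + ε * (z + z')) * (z - z') - k * ϱ * (y - y') := by
      unfold Hfun
      rw [hk]
      field_simp
      ring
    have hslope : |k * m + ε * (z + z')| ≤ k * |m| + |ε| * (2 * r) := by
      have hsum : |z + z'| ≤ 2 * r := by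
        rw [abs_of_nonneg (add_nonneg hz.1 hz'.1)]
        linarith [hz.2, hz'.2]
      calc |k * m + ε * (z + z')| ≤ |k * m| + |ε * (z + z')| := abs_add_le _ _
        _ = k * |m| + |ε| * |z + z'| := by rw [abs_mul, abs_mul, abs_of_nonneg hk0]
        _ ≤ k * |m| + |ε| * (2 * r) := by gcongr
    have hslope0 : 0 ≤ k * |m| + |ε| * (2 * r) := (abs_nonneg _).trans hslope
    have hkϱ : 0 ≤ k * ϱ := mul_nonneg hk0 hϱ.le
    calc |Hfun σ ϱ m ε h x y z - Hfun σ ϱ m ε h x y' z'|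
        ≤ |(k * m + ε * (z + z')) * (z - z')| + |k * ϱ * (y - y')| := by
          rw [hsplit]
          exact abs_sub _ _
      _ = |k * m + ε * (z + z')| * |z - z'| + k * ϱ * |y - y'| := by
          rw [abs_mul, abs_mul (k * ϱ), abs_of_nonneg hkϱ]
      _ ≤ (k * |m| + |ε| * (2 * r)) * |z - z'| + k * ϱ * |y - y'| := by gcongr
      _ ≤ (k * ϱ + k * |m| + |ε| * (2 * r)) * (|y - y'| + |z - z'|) := by
          linarith [mul_nonneg hkϱ (abs_nonneg (z - z')),
            mul_nonneg hslope0 (abs_nonneg (y - y'))]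

theorem Hfun_eq_add_mul_sq (hσ : σ ≠ 0) (x y z : ℝ) :
    Hfun σ ϱ m ε₁ h x y z = Hfun σ ϱ m ε₂ h x y z + (ε₁ - ε₂) * z ^ 2 := by
  unfold Hfun
  field_simp
  ring

theorem Hfun_sub_value (c x y z : ℝ) :
    Hfun σ ϱ m ε h x (y - c) z = Hfun σ ϱ m ε h x y z + 2 / σ ^ 2 * ϱ * c := by
  unfold Hfun
  ring

namespace IsHJBSolution

theorem isSubsolution (hf : IsHJBSolution b σ ϱ r m ε h f f' f'') (hr : 0 ≤ r) :
    IsSubsolution 0 b r (Hfun σ ϱ m ε h) f f' f'' := by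
  obtain ⟨hd, hd', hcont, heq, hleft, hright⟩ := hf
  have hineq : ∀ x ∈ Ioo 0 b,
      (0 ≤ f'' x + Hfun σ ϱ m ε h x (f x) (f' x) ∧ 0 ≤ f' x) ∧ 0 ≤ r - f' x := fun x hx => by
    simpa only [le_min_iff] using (heq x hx).ge
  refine ⟨⟨hd, hd', hcont⟩, fun x hx => ?_, fun x hx => (hineq x hx).1.1⟩
  rcases hx.1.eq_or_lt with rfl | hx0
  · rw [hleft]
    exact left_mem_Icc.2 hr
  rcases hx.2.eq_or_lt with rfl | hxb
  · rw [hright]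
    exact right_mem_Icc.2 hr
  · exact ⟨(hineq x ⟨hx0, hxb⟩).1.2, sub_nonneg.1 (hineq x ⟨hx0, hxb⟩).2⟩

theorem isSupersolution (hf : IsHJBSolution b σ ϱ r m ε h f f' f'') :
    IsSupersolution 0 b r (Hfun σ ϱ m ε h) f f' f'' := by
  obtain ⟨hd, hd', hcont, heq, hleft, hright⟩ := hf
  refine ⟨⟨hd, hd', hcont⟩, fun x hx hmem => ?_, hleft.le, hright.ge⟩
  by_contra! hpos
  exact (lt_min (lt_min hpos hmem.1) (sub_pos.2 hmem.2)).ne' (heq x hx)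

theorem isStrictSubsolution_of_lt (hf : IsHJBSolution b σ ϱ r m ε₂ h f f' f'') (hσ : σ ≠ 0)
    (hr : 0 ≤ r) (hε : ε₂ < ε₁) : IsStrictSubsolution 0 b r (Hfun σ ϱ m ε₁ h) f f' f'' where
  toIsC2On := (hf.isSubsolution hr).toIsC2On
  deriv_mem := (hf.isSubsolution hr).deriv_mem
  nonneg x hx := by
    rw [Hfun_eq_add_mul_sq (ε₂ := ε₂) hσ, ← add_assoc]
    exact add_nonneg ((hf.isSubsolution hr).nonneg x hx)
      (mul_nonneg (sub_pos.2 hε).le (sq_nonneg _))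
  pos x hx hmem := by
    rw [Hfun_eq_add_mul_sq (ε₂ := ε₂) hσ, ← add_assoc]
    exact add_pos_of_nonneg_of_pos ((hf.isSubsolution hr).nonneg x hx)
      (mul_pos (sub_pos.2 hε) (pow_pos hmem.1 2))

theorem isSubsolution_sub_const (hf : IsHJBSolution b σ ϱ r m ε₁ h f f' f'') (hσ : 0 < σ)
    (hϱ : 0 < ϱ) (hr : 0 ≤ r) (hε : ε₂ ≤ ε₁) :
    IsSubsolution 0 b r (Hfun σ ϱ m ε₂ h)
      (fun x => f x - σ ^ 2 * r ^ 2 / (2 * ϱ) * (ε₁ - ε₂)) f' f'' where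
  toIsC2On := by
    simpa [sub_eq_add_neg] using
      (hf.isSubsolution hr).toIsC2On.add_affine 0 (-(σ ^ 2 * r ^ 2 / (2 * ϱ) * (ε₁ - ε₂)))
  deriv_mem := (hf.isSubsolution hr).deriv_mem
  nonneg x hx := by
    have hsub := (hf.isSubsolution hr).nonneg x hx
    obtain ⟨hlow, hhigh⟩ := (hf.isSubsolution hr).deriv_mem x (Ioo_subset_Icc_self hx)
    have hsq : (ε₁ - ε₂) * f' x ^ 2 ≤ (ε₁ - ε₂) * r ^ 2 :=
      mul_le_mul_of_nonneg_left (pow_le_pow_left₀ hlow hhigh 2) (sub_nonneg.2 hε)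
    have hshift : 2 / σ ^ 2 * ϱ * (σ ^ 2 * r ^ 2 / (2 * ϱ) * (ε₁ - ε₂)) = (ε₁ - ε₂) * r ^ 2 := by
      field_simp
    rw [Hfun_eq_add_mul_sq (ε₂ := ε₂) hσ.ne'] at hsub
    rw [Hfun_sub_value, hshift]
    linarith

end IsHJBSolution

theorem stability_const_le (hϱ : 0 ≤ ϱ) (hε₂ : 0 < ε₂) (hε : ε₂ ≤ ε₁) :
    σ ^ 2 * r ^ 2 / (2 * ϱ) ≤ ε₁ * σ ^ 2 * r ^ 2 / (2 * ε₂ * ϱ) := by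
  have hratio : ε₁ * σ ^ 2 * r ^ 2 / (2 * ε₂ * ϱ) = ε₁ / ε₂ * (σ ^ 2 * r ^ 2 / (2 * ϱ)) := by
    rw [div_mul_div_comm, mul_left_comm ε₂, ← mul_assoc 2, ← mul_assoc ε₁]
  rw [hratio]
  exact le_mul_of_one_le_left (by positivity) ((one_le_div hε₂).2 hε)

end HJB

theorem stmt16_general (b σ ϱ r m : ℝ) (hb : 0 < b) (hσ : 0 < σ) (hϱ : 0 < ϱ) (hr : 0 < r)
    (h : ℝ → ℝ) (ε₁ ε₂ : ℝ) (hε : ε₂ < ε₁) (f₁ f₁' f₁'' f₂ f₂' f₂'' : ℝ → ℝ)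
    (hf₁ : IsHJBSolution b σ ϱ r m ε₁ h f₁ f₁' f₁'')
    (hf₂ : IsHJBSolution b σ ϱ r m ε₂ h f₂ f₂' f₂'') :
    ∀ x ∈ Icc (0:ℝ) b, f₂ x < f₁ x ∧ f₁ x ≤ f₂ x + σ ^ 2 * r ^ 2 / (2 * ϱ) * (ε₁ - ε₂) := by
  intro x hx
  have hlt : f₂ x < f₁ x := (hf₂.isStrictSubsolution_of_lt hσ.ne' hr.le hε).lt
    hf₁.isSupersolution (isProperHamiltonian_Hfun hσ hϱ) hb hr hx
  have hle : f₁ x - σ ^ 2 * r ^ 2 / (2 * ϱ) * (ε₁ - ε₂) ≤ f₂ x :=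
    (hf₁.isSubsolution_sub_const hσ hϱ hr.le hε.le).le
      hf₂.isSupersolution (isProperHamiltonian_Hfun hσ hϱ) hb hr hx
  exact ⟨hlt, sub_le_iff_le_add.1 hle⟩

/-- Let 0 < ε₂ < ε₁, and let f₁ and f₂ be C² solutions of HJB(ε₁) and
HJB(ε₂), respectively. Then for every x ∈ [0,b],
f₂(x) < f₁(x) ≤ f₂(x) + (ε₁σ²r²/(2ε₂ϱ))·(ε₁ − ε₂). -/
theorem stmt16 (b σ ϱ r m : ℝ) (hb : 0 < b) (hσ : 0 < σ) (hϱ : 0 < ϱ) (hr : 0 < r)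
    (h : ℝ → ℝ)
    (hLip : ∃ K : NNReal, LipschitzOnWith K h (Icc (0:ℝ) b))
    (hconv : ConvexOn ℝ (Icc (0:ℝ) b) h)
    (hmono : StrictMonoOn h (Icc (0:ℝ) b)) (h0 : h 0 = 0)
    (ε₁ ε₂ : ℝ) (hε₂ : 0 < ε₂) (hε : ε₂ < ε₁)
    (f₁ f₁' f₁'' f₂ f₂' f₂'' : ℝ → ℝ)
    (hf₁ : IsHJBSolution b σ ϱ r m ε₁ h f₁ f₁' f₁'')
    (hf₂ : IsHJBSolution b σ ϱ r m ε₂ h f₂ f₂' f₂'') :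
    ∀ x ∈ Icc (0:ℝ) b, f₂ x < f₁ x ∧
      f₁ x ≤ f₂ x + (ε₁ * σ ^ 2 * r ^ 2 / (2 * ε₂ * ϱ)) * (ε₁ - ε₂) := by
  intro x hx
  obtain ⟨hlt, hle⟩ := stmt16_general b σ ϱ r m hb hσ hϱ hr h ε₁ ε₂ hε _ _ _ _ _ _ hf₁ hf₂ x hx
  exact ⟨hlt, hle.trans (add_le_add le_rfl
    (mul_le_mul_of_nonneg_right (stability_const_le hϱ.le hε₂ hε.le) (sub_pos.2 hε).le))⟩
end

section
/- For every ε ∈ [0,∞): β_ε ≤ liminf_{δ→0} β_{ε+δ} ≤ limsup_{δ→0} β̂_{ε+δ} ≤ β̂_ε, where δ → 0 through values with ε + δ ≥ 0. Consequently, if β_ε = β̂_ε (i.e., the optimal reflecting cut-off is unique at ε), then lim_{δ→0} β_{ε+δ} = lim_{δ→0} β̂_{ε+δ} = β̂_ε. -/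
open Set Filter Topology

/-!
At a maximum of the difference of two solutions the quadratic terms of the two equations differ by
at most `|ε₁ - ε₂| r²`, so discounting bounds the difference by a multiple of `|ε₁ - ε₂|`: solutions
depend uniformly on `ε`. The equation bounds `f''`, so interpolation between `f` and `f''` makes the
derivatives `f'` converge uniformly too. The lower bound for `β` then holds because `f' < r`
persists on compact subintervals of `[0, β)`, and the upper bound for `β̂` because an equation
satisfied on a fixed interval passes to the limit. Finally `β ≤ β̂`, since `f'` does not vanish on
`(0, b]` and therefore the equation holds wherever `f' < r`.
-/

section Order

variable {α ι : Type*} {l : Filter ι} {u v : ι → α} {A B : α}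

theorem le_liminf_and_liminf_le_limsup_and_limsup_le [ConditionallyCompleteLinearOrder α]
    [NoMinOrder α] [NoMaxOrder α] [l.NeBot] (hu : ∀ a < A, ∀ᶠ i in l, a < u i)
    (hv : ∀ a > B, ∀ᶠ i in l, v i < a) (huv : ∀ᶠ i in l, u i ≤ v i) :
    A ≤ liminf u l ∧ liminf u l ≤ limsup v l ∧ limsup v l ≤ B := by
  obtain ⟨a, ha⟩ := exists_lt A
  obtain ⟨c, hc⟩ := exists_gt B
  have u_ge : IsBoundedUnder (· ≥ ·) l u := ⟨a, eventually_map.2 ((hu a ha).mono fun _ h => h.le)⟩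
  have v_le : IsBoundedUnder (· ≤ ·) l v := ⟨c, eventually_map.2 ((hv c hc).mono fun _ h => h.le)⟩
  have u_le : IsBoundedUnder (· ≤ ·) l u := v_le.mono_le huv
  have v_ge : IsBoundedUnder (· ≥ ·) l v := u_ge.mono_ge huv
  refine ⟨(le_liminf_iff u_le.isCoboundedUnder_ge u_ge).2 hu, ?_,
    (limsup_le_iff v_ge.isCoboundedUnder_le v_le).2 hv⟩
  calc liminf u l ≤ liminf v l := liminf_le_liminf huv u_ge v_le.isCoboundedUnder_ge
    _ ≤ limsup v l := liminf_le_limsup v_le v_ge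

theorem tendsto_and_tendsto_of_eventually_le [LinearOrder α] [TopologicalSpace α]
    [OrderTopology α] (hu : ∀ a < A, ∀ᶠ i in l, a < u i) (hv : ∀ a > A, ∀ᶠ i in l, v i < a)
    (huv : ∀ᶠ i in l, u i ≤ v i) : Tendsto u l (𝓝 A) ∧ Tendsto v l (𝓝 A) := by
  refine ⟨tendsto_order.2 ⟨hu, fun a ha => ?_⟩, tendsto_order.2 ⟨fun a ha => ?_, hv⟩⟩
  · filter_upwards [hv a ha, huv] with i hva hle using hle.trans_lt hva
  · filter_upwards [hu a ha, huv] with i hua hle using hua.trans_le hle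

end Order

section Calculus

theorem le_on_Icc_of_le_on_Ioo {a b : ℝ} (hab : a < b) {u v : ℝ → ℝ}
    (hu : ContinuousOn u (Icc a b)) (hv : ContinuousOn v (Icc a b))
    (huv : ∀ x ∈ Ioo a b, u x ≤ v x) : ∀ x ∈ Icc a b, u x ≤ v x := by
  rw [← closure_Ioo hab.ne] at hu hv ⊢
  exact le_on_closure huv hu hv

theorem nhdsGT_le_nhdsWithin_Icc {a b x : ℝ} (hx : x ∈ Ico a b) : 𝓝[>] x ≤ 𝓝[Icc a b] x :=
  nhdsWithin_le_of_mem (mem_of_superset (Icc_mem_nhdsGT hx.2) (Icc_subset_Icc_left hx.1))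

theorem nhdsLT_le_nhdsWithin_Icc {a b x : ℝ} (hx : x ∈ Ioc a b) : 𝓝[<] x ≤ 𝓝[Icc a b] x :=
  nhdsWithin_le_of_mem (mem_of_superset (Icc_mem_nhdsLT hx.1) (Icc_subset_Icc_right hx.2))

theorem exists_isLeast_isMaxOn {s : Set ℝ} (hs : IsCompact s) (hne : s.Nonempty)
    {W : ℝ → ℝ} (hW : ContinuousOn W s) : ∃ x, IsLeast {x | x ∈ s ∧ IsMaxOn W s x} x := by
  obtain ⟨c, hc, hmax⟩ := hs.exists_isMaxOn hne hW
  have heq : {x | x ∈ s ∧ IsMaxOn W s x} = s ∩ W ⁻¹' Ici (W c) := by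
    ext x
    exact and_congr_right fun _ =>
      ⟨fun h => h hc, fun h y hy => show W y ≤ W x from (hmax hy).trans h⟩
  rw [heq]
  exact (hs.of_isClosed_subset (hW.preimage_isClosed_of_isClosed hs.isClosed isClosed_Ici)
    inter_subset_left).exists_isLeast ⟨c, hc, mem_preimage.2 self_mem_Ici⟩

theorem frequently_nhdsLT_deriv_pos {a x : ℝ} {W W' : ℝ → ℝ} (hax : a < x)
    (hW : ContinuousOn W (Icc a x)) (hW' : ∀ y ∈ Ioo a x, HasDerivAt W (W' y) y)
    (hlt : ∀ y ∈ Ico a x, W y < W x) : ∃ᶠ y in 𝓝[<] x, 0 < W' y := by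
  intro hev
  obtain ⟨c, hc, hsub⟩ := mem_nhdsLT_iff_exists_Ico_subset.1 (hev.and (Ioo_mem_nhdsLT hax))
  have hac : a < c := (hsub ⟨le_rfl, hc⟩).2.1
  obtain ⟨ξ, hξ, hslope⟩ := exists_hasDerivAt_eq_slope W W' hc
    (hW.mono (Icc_subset_Icc_left hac.le)) fun y hy => hW' y ⟨hac.trans hy.1, hy.2⟩
  refine (hsub ⟨hξ.1.le, hξ.2⟩).1 ?_
  simp only [hslope]
  exact div_pos (sub_pos.2 (hlt c ⟨hac.le, hc⟩)) (sub_pos.2 hc)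

theorem frequently_nhdsGT_deriv_nonpos {x b : ℝ} {W W' : ℝ → ℝ} (hxb : x < b)
    (hW : ContinuousOn W (Icc x b)) (hW' : ∀ y ∈ Ioo x b, HasDerivAt W (W' y) y)
    (hle : ∀ y ∈ Ioc x b, W y ≤ W x) : ∃ᶠ y in 𝓝[>] x, W' y ≤ 0 := by
  intro hev
  obtain ⟨c, hc, hsub⟩ := mem_nhdsGT_iff_exists_Ioc_subset.1 (hev.and (Ioo_mem_nhdsGT hxb))
  have hcb : c < b := (hsub ⟨hc, le_rfl⟩).2.2
  obtain ⟨ξ, hξ, hslope⟩ := exists_hasDerivAt_eq_slope W W' hc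
    (hW.mono (Icc_subset_Icc_right hcb.le)) fun y hy => hW' y ⟨hy.1, hy.2.trans hcb⟩
  refine (hsub ⟨hξ.1, hξ.2.le⟩).1 ?_
  simp only [hslope]
  exact div_nonpos_of_nonpos_of_nonneg (sub_nonpos.2 (hle c ⟨hc, hcb.le⟩)) (sub_pos.2 hc).le

theorem nonpos_of_hasDerivWithinAt_Ioi_of_frequently_le {x c : ℝ} {g : ℝ → ℝ}
    (hg : HasDerivWithinAt g c (Ioi x) x) (hle : ∃ᶠ y in 𝓝[>] x, g y ≤ g x) : c ≤ 0 := by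
  rw [hasDerivWithinAt_iff_tendsto_slope' self_notMem_Ioi] at hg
  refine le_of_tendsto_of_frequently hg ((hle.and_eventually self_mem_nhdsWithin).mono ?_)
  rintro y ⟨hy, hxy⟩
  rw [slope_def_field]
  exact div_nonpos_of_nonpos_of_nonneg (sub_nonpos.2 hy) (sub_nonneg.2 (mem_Ioi.1 hxy).le)

theorem nonpos_of_hasDerivWithinAt_Iio_of_frequently_ge {x c : ℝ} {g : ℝ → ℝ}
    (hg : HasDerivWithinAt g c (Iio x) x) (hge : ∃ᶠ y in 𝓝[<] x, g x ≤ g y) : c ≤ 0 := by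
  rw [hasDerivWithinAt_iff_tendsto_slope' self_notMem_Iio] at hg
  refine le_of_tendsto_of_frequently hg ((hge.and_eventually self_mem_nhdsWithin).mono ?_)
  rintro y ⟨hy, hyx⟩
  rw [slope_def_field]
  exact div_nonpos_of_nonneg_of_nonpos (sub_nonneg.2 hy) (sub_nonpos.2 (mem_Iio.1 hyx).le)

theorem nonpos_of_hasDerivAt_le_mul {a d K : ℝ} {u u' : ℝ → ℝ} (hu : ContinuousOn u (Icc a d))
    (hu' : ∀ x ∈ Ico a d, HasDerivAt u (u' x) x) (ha : u a ≤ 0)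
    (hle : ∀ x ∈ Ico a d, u' x ≤ K * u x) : ∀ x ∈ Icc a d, u x ≤ 0 := by
  intro x hx
  have h := le_gronwallBound_of_liminf_deriv_right_le (K := K) (ε := 0) hu
    (fun y hy _ => (hu' y hy).hasDerivWithinAt.liminf_right_slope_le) ha
    (fun y hy => by simpa only [add_zero] using hle y hy) x hx
  rwa [gronwallBound_ε0_δ0] at h

variable {E : Type*} [NormedAddCommGroup E] [NormedSpace ℝ E]

theorem norm_deriv_le_of_norm_deriv_deriv_le {a b : ℝ} {W W' W'' : ℝ → E}
    (hW : ∀ x ∈ Icc a b, HasDerivWithinAt W (W' x) (Icc a b) x)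
    (hW' : ∀ x ∈ Icc a b, HasDerivWithinAt W' (W'' x) (Icc a b) x)
    {A C t : ℝ} (hA : ∀ x ∈ Icc a b, ‖W x‖ ≤ A) (hC : ∀ x ∈ Icc a b, ‖W'' x‖ ≤ C)
    (ht : 0 < t) (htb : t ≤ (b - a) / 2) : ∀ x ∈ Icc a b, ‖W' x‖ ≤ 2 * A / t + C * t := by
  intro x hx
  obtain ⟨y, hy, hyx⟩ : ∃ y ∈ Icc a b, |y - x| = t := by
    rcases le_total x ((a + b) / 2) with hmid | hmid
    · exact ⟨x + t, ⟨by linarith [hx.1], by linarith⟩, by simp [ht.le]⟩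
    · exact ⟨x - t, ⟨by linarith, by linarith [hx.2]⟩, by simp [ht.le]⟩
  have hC₀ : 0 ≤ C := (norm_nonneg _).trans (hC x hx)
  have hsub : uIcc x y ⊆ Icc a b := uIcc_subset_Icc hx hy
  have hosc : ∀ z ∈ uIcc x y, ‖W' z - W' x‖ ≤ C * t := fun z hz =>
    calc ‖W' z - W' x‖ ≤ C * ‖z - x‖ :=
          (convex_Icc a b).norm_image_sub_le_of_norm_hasDerivWithin_le hW' hC hx (hsub hz)
      _ ≤ C * t := by
          rw [Real.norm_eq_abs, ← hyx]
          exact mul_le_mul_of_nonneg_left (abs_sub_left_of_mem_uIcc hz) hC₀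
  have htaylor : ‖(W y - y • W' x) - (W x - x • W' x)‖ ≤ C * t * ‖y - x‖ := by
    refine (convex_uIcc x y).norm_image_sub_le_of_norm_hasDerivWithin_le
      (f := fun z => W z - z • W' x) (f' := fun z => W' z - W' x) (fun z hz => ?_) hosc
      left_mem_uIcc right_mem_uIcc
    simpa only [one_smul] using! ((hW z (hsub hz)).mono hsub).sub
      ((hasDerivWithinAt_id z _).smul_const (W' x))
  have hmul : ‖W' x‖ * t ≤ 2 * A + C * t * t :=
    calc ‖W' x‖ * t = ‖W y - W x - ((W y - y • W' x) - (W x - x • W' x))‖ := by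
          rw [← hyx, ← Real.norm_eq_abs, mul_comm, ← norm_smul, sub_smul]
          congr 1
          abel
      _ ≤ ‖W y‖ + ‖W x‖ + C * t * t := by
          rw [Real.norm_eq_abs, hyx] at htaylor
          exact (norm_sub_le _ _).trans (add_le_add (norm_sub_le _ _) htaylor)
      _ ≤ 2 * A + C * t * t := by linarith [hA x hx, hA y hy]
  rw [div_add' _ _ _ ht.ne', le_div_iff₀ ht]
  exact hmul

theorem tendstoUniformlyOn_deriv_of_norm_deriv_deriv_le {ι : Type*} {l : Filter ι} {a b : ℝ}
    (hab : a < b) {F F' F'' : ι → ℝ → E} {g g' g'' : ℝ → E}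
    (hF : ∀ᶠ i in l, ∀ x ∈ Icc a b, HasDerivWithinAt (F i) (F' i x) (Icc a b) x)
    (hF' : ∀ᶠ i in l, ∀ x ∈ Icc a b, HasDerivWithinAt (F' i) (F'' i x) (Icc a b) x)
    (hg : ∀ x ∈ Icc a b, HasDerivWithinAt g (g' x) (Icc a b) x)
    (hg' : ∀ x ∈ Icc a b, HasDerivWithinAt g' (g'' x) (Icc a b) x) {B C : ℝ}
    (hFB : ∀ᶠ i in l, ∀ x ∈ Icc a b, ‖F'' i x‖ ≤ B) (hgC : ∀ x ∈ Icc a b, ‖g'' x‖ ≤ C)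
    (hlim : TendstoUniformlyOn F g l (Icc a b)) : TendstoUniformlyOn F' g' l (Icc a b) := by
  rw [Metric.tendstoUniformlyOn_iff] at hlim ⊢
  intro η hη
  obtain ⟨t, ⟨ht, htb⟩, htη⟩ : ∃ t, (0 < t ∧ t ≤ (b - a) / 2) ∧ (C + B) * t < η / 2 := by
    have hzero : Tendsto (fun t => (C + B) * t) (𝓝[>] 0) (𝓝 0) := by
      have h : Tendsto (fun t => (C + B) * t) (𝓝 0) (𝓝 ((C + B) * 0)) := tendsto_id.const_mul _
      rw [mul_zero] at h
      exact h.mono_left nhdsWithin_le_nhds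
    exact (Filter.Eventually.and (Ioc_mem_nhdsGT (half_pos (sub_pos.2 hab)))
      (hzero.eventually_lt_const (half_pos hη))).exists
  filter_upwards [hF, hF', hFB, hlim (t * η / 4) (by positivity)] with i hFi hFi' hBi hclose x hx
  have hinterp : ‖g' x - F' i x‖ ≤ 2 * (t * η / 4) / t + (C + B) * t :=
    norm_deriv_le_of_norm_deriv_deriv_le (W := fun x => g x - F i x)
      (W' := fun x => g' x - F' i x) (W'' := fun x => g'' x - F'' i x)
      (fun y hy => (hg y hy).sub (hFi y hy)) (fun y hy => (hg' y hy).sub (hFi' y hy))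
      (fun y hy => by simpa only [dist_eq_norm] using (hclose y hy).le)
      (fun y hy => (norm_sub_le _ _).trans (add_le_add (hgC y hy) (hBi y hy))) ht htb x hx
  rw [dist_eq_norm]
  calc ‖g' x - F' i x‖ ≤ 2 * (t * η / 4) / t + (C + B) * t := hinterp
    _ < η / 2 + η / 2 := by
        have : 2 * (t * η / 4) / t = η / 2 := by field_simp; norm_num
        linarith
    _ = η := add_halves η

end Calculus

section Cutoff

/-- The first point of `(0, b]` at which `g` takes the value `r`: with `g = f_ε'` this is the
minimal cut-off `β_ε`. It is the infimum of these points, `0` if there are none. -/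
noncomputable def minCutoff (b r : ℝ) (g : ℝ → ℝ) : ℝ :=
  sInf {x : ℝ | x ∈ Ioc (0 : ℝ) b ∧ g x = r}

/-- The length of the longest interval `[0, x]`, `x ∈ (0, b]`, on which `R` vanishes: with `R` the
residual of the equation this is the maximal cut-off `β̂_ε`. It is `0` if there is no such
interval. -/
noncomputable def maxCutoff (b : ℝ) (R : ℝ → ℝ) : ℝ :=
  sSup {x : ℝ | x ∈ Ioc (0 : ℝ) b ∧ ∀ y ∈ Icc (0 : ℝ) x, R y = 0}

variable {b r x : ℝ} {g R : ℝ → ℝ}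

theorem minCutoff_le (hx : x ∈ Ioc 0 b) (hgx : g x = r) : minCutoff b r g ≤ x :=
  csInf_le ⟨0, fun _ hy => hy.1.1.le⟩ ⟨hx, hgx⟩

theorem le_minCutoff (hb : 0 < b) (hgb : g b = r) (hx : ∀ y ∈ Ioc 0 b, g y = r → x ≤ y) :
    x ≤ minCutoff b r g :=
  le_csInf ⟨b, right_mem_Ioc.2 hb, hgb⟩ fun y hy => hx y hy.1 hy.2

theorem minCutoff_pos (hb : 0 < b) (hg : ContinuousOn g (Icc 0 b)) (hg₀ : g 0 < r)
    (hgb : g b = r) : 0 < minCutoff b r g := by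
  have hev : ∀ᶠ y in 𝓝[>] 0, g y < r :=
    ((hg 0 (left_mem_Icc.2 hb.le)).mono_left
      (nhdsGT_le_nhdsWithin_Icc (left_mem_Ico.2 hb))).eventually_lt_const hg₀
  obtain ⟨c, hc, hsub⟩ := mem_nhdsGT_iff_exists_Ioc_subset.1 hev
  refine lt_of_lt_of_le hc (le_minCutoff hb hgb fun y hy hgy => ?_)
  by_contra! hyc
  exact (hsub ⟨hy.1, hyc.le⟩ : g y < r).ne hgy

theorem lt_of_lt_minCutoff (hg₀ : g 0 < r) (hgr : ∀ y ∈ Icc 0 b, g y ≤ r) (hx : x ∈ Icc 0 b)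
    (hlt : x < minCutoff b r g) : g x < r := by
  refine (hgr x hx).lt_of_ne fun hgx => hlt.not_ge (minCutoff_le ⟨hx.1.lt_of_ne ?_, hx.2⟩ hgx)
  rintro rfl
  exact hg₀.ne hgx

theorem eventually_lt_minCutoff {ι : Type*} {l : Filter ι} {G : ι → ℝ → ℝ} (hb : 0 < b)
    (hg : ContinuousOn g (Icc 0 b)) (hg₀ : g 0 < r) (hgb : g b = r)
    (hgr : ∀ y ∈ Icc 0 b, g y ≤ r) (hGb : ∀ᶠ i in l, G i b = r)
    (hlim : TendstoUniformlyOn G g l (Icc 0 b)) {a : ℝ} (ha : a < minCutoff b r g) :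
    ∀ᶠ i in l, a < minCutoff b r (G i) := by
  obtain ⟨c, hac, hc⟩ := exists_between (max_lt ha (minCutoff_pos hb hg hg₀ hgb))
  have hc₀ : 0 < c := (le_max_right _ _).trans_lt hac
  have hsub : Icc 0 c ⊆ Icc 0 b :=
    Icc_subset_Icc_right (hc.le.trans (minCutoff_le (right_mem_Ioc.2 hb) hgb))
  obtain ⟨x, hx, hmax⟩ :=
    isCompact_Icc.exists_isMaxOn (nonempty_Icc.2 hc₀.le) (hg.mono hsub)
  have hgx : g x < r := lt_of_lt_minCutoff hg₀ hgr (hsub hx) (hx.2.trans_lt hc)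
  filter_upwards [(hlim.mono hsub).eventually_forall_lt hgx fun _ hy => hmax hy, hGb] with i hi hib
  refine ((le_max_left _ _).trans_lt hac).trans_le (le_minCutoff hb hib fun y hy hGy => ?_)
  by_contra! hyc
  exact (hi y ⟨hy.1.le, hyc.le⟩).ne hGy

theorem le_maxCutoff (hx : x ∈ Ioc 0 b) (hR : ∀ y ∈ Icc 0 x, R y = 0) : x ≤ maxCutoff b R :=
  le_csSup ⟨b, fun _ hy => hy.1.2⟩ ⟨hx, hR⟩

theorem maxCutoff_nonneg : 0 ≤ maxCutoff b R :=
  Real.sSup_nonneg fun _ hx => hx.1.1.le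

theorem maxCutoff_le (hb : 0 ≤ b) : maxCutoff b R ≤ b :=
  Real.sSup_le (fun _ hx => hx.1.2) hb

theorem eq_zero_of_lt_maxCutoff (hx₀ : 0 ≤ x) (hx : x < maxCutoff b R) : R x = 0 := by
  have hne : {x : ℝ | x ∈ Ioc (0 : ℝ) b ∧ ∀ y ∈ Icc (0 : ℝ) x, R y = 0}.Nonempty := by
    by_contra! hempty
    rw [maxCutoff, hempty, Real.sSup_empty] at hx
    exact hx.not_ge hx₀
  obtain ⟨y, hy, hxy⟩ := exists_lt_of_lt_csSup hne hx
  exact hy.2 x ⟨hx₀, hxy.le⟩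

end Cutoff

/-- The left-hand side `f'' + H_ε(x, f, f')` of the equation that holds below the reflection
cut-off. -/
noncomputable def hjbResidual (σ ϱ m ε : ℝ) (h f f' f'' : ℝ → ℝ) (x : ℝ) : ℝ :=
  f'' x + Hfun σ ϱ m ε h x (f x) (f' x)

section Hamiltonian

variable {σ ϱ m ε : ℝ} {h : ℝ → ℝ} {x : ℝ}

theorem Hfun_sub_Hfun (hσ : σ ≠ 0) (ε₁ ε₂ y₁ y₂ z : ℝ) :
    Hfun σ ϱ m ε₁ h x y₁ z - Hfun σ ϱ m ε₂ h x y₂ z =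
      (ε₁ - ε₂) * z ^ 2 - 2 * ϱ / σ ^ 2 * (y₁ - y₂) := by
  unfold Hfun
  field_simp
  ring

theorem abs_Hfun_le {r y z M Y A : ℝ} (hε : |ε| ≤ M) (hy : |y| ≤ Y) (hz : |z| ≤ r)
    (hh : |h x| ≤ A) :
    |Hfun σ ϱ m ε h x y z| ≤
      2 / σ ^ 2 * (|m| * r + 1 / 2 * σ ^ 2 * M * r ^ 2 + |ϱ| * Y + A) := by
  have hM : 0 ≤ M := (abs_nonneg ε).trans hε
  have hlin : |m * z| ≤ |m| * r := by rw [abs_mul]; gcongr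
  have hquad : |1 / 2 * σ ^ 2 * ε * z ^ 2| ≤ 1 / 2 * σ ^ 2 * M * r ^ 2 := by
    rw [abs_mul, abs_mul, abs_of_nonneg (by positivity : 0 ≤ 1 / 2 * σ ^ 2), abs_pow]
    gcongr
  have hdiscount : |ϱ * y| ≤ |ϱ| * Y := by rw [abs_mul]; gcongr
  rw [Hfun, abs_mul, abs_of_nonneg (by positivity : 0 ≤ 2 / σ ^ 2)]
  gcongr
  calc |m * z + 1 / 2 * σ ^ 2 * ε * z ^ 2 - ϱ * y + h x|
      ≤ |m * z| + |1 / 2 * σ ^ 2 * ε * z ^ 2| + |ϱ * y| + |h x| :=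
        (abs_add_le _ _).trans (add_le_add_left
          ((abs_sub _ _).trans (add_le_add_left (abs_add_le _ _) _)) _)
    _ ≤ |m| * r + 1 / 2 * σ ^ 2 * M * r ^ 2 + |ϱ| * Y + A := by gcongr

theorem Hfun_sub_Hfun_le {r x₁ x₂ y₁ y₂ z : ℝ} (hh : h x₁ ≤ h x₂) (hy : y₁ ≤ y₂) (hz : 0 ≤ z)
    (hzr : z ≤ r) :
    Hfun σ ϱ m ε h x₁ y₁ 0 - Hfun σ ϱ m ε h x₂ y₂ z ≤
      2 / σ ^ 2 * ((|m| + 1 / 2 * σ ^ 2 * |ε| * r) * z + |ϱ| * (y₂ - y₁)) := by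
  have hlin : -m * z ≤ |m| * z := mul_le_mul_of_nonneg_right (neg_le_abs m) hz
  have hquad : -ε * z ^ 2 ≤ |ε| * (r * z) := by
    rw [sq]
    exact mul_le_mul (neg_le_abs ε) (mul_le_mul_of_nonneg_right hzr hz) (mul_nonneg hz hz)
      (abs_nonneg ε)
  have hdiscount : ϱ * (y₂ - y₁) ≤ |ϱ| * (y₂ - y₁) :=
    mul_le_mul_of_nonneg_right (le_abs_self ϱ) (sub_nonneg.2 hy)
  have hquad' := mul_le_mul_of_nonneg_left hquad (by positivity : 0 ≤ 1 / 2 * σ ^ 2)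
  unfold Hfun
  rw [← mul_sub]
  refine mul_le_mul_of_nonneg_left ?_ (by positivity)
  linarith

theorem tendstoUniformlyOn_Hfun {ι : Type*} {l : Filter ι} {s : Set ℝ} (hs : IsCompact s)
    {e : ι → ℝ} {F F' : ι → ℝ → ℝ} {f f' : ℝ → ℝ} (he : Tendsto e l (𝓝 ε))
    (hf' : ContinuousOn f' s) (hF : TendstoUniformlyOn F f l s)
    (hF' : TendstoUniformlyOn F' f' l s) :
    TendstoUniformlyOn (fun i x => Hfun σ ϱ m (e i) h x (F i x) (F' i x))
      (fun x => Hfun σ ϱ m ε h x (f x) (f' x)) l s := by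
  have const_mul : ∀ (c : ℝ) {G : ι → ℝ → ℝ} {g : ℝ → ℝ}, TendstoUniformlyOn G g l s →
      TendstoUniformlyOn (fun i x => c * G i x) (fun x => c * g x) l s := fun c _ _ hG =>
    (lipschitzWith_smul c).uniformContinuous.comp_tendstoUniformlyOn hG
  have hquad : TendstoUniformlyOn (fun i x => e i * F' i x ^ 2) (fun x => ε * f' x ^ 2) l s := by
    rw [← tendstoLocallyUniformlyOn_iff_tendstoUniformlyOn_of_compact hs] at hF' ⊢
    simp only [sq]
    exact (he.tendstoUniformlyOn_const s).tendstoLocallyUniformlyOn.mul₀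
      (hF'.mul₀ hF' hf' hf') continuousOn_const (hf'.mul hf')
  have hsource : TendstoUniformlyOn (fun _ : ι => h) h l s := fun _ hu =>
    Eventually.of_forall fun _ _ _ => refl_mem_uniformity hu
  simpa only [Hfun, mul_assoc, Pi.add_apply, Pi.sub_apply] using! const_mul (2 / σ ^ 2)
    ((((const_mul m hF').add (const_mul (1 / 2) (const_mul (σ ^ 2) hquad))).sub
      (const_mul ϱ hF)).add hsource)

end Hamiltonian

namespace IsHJBSolution

section Basic

variable {b σ ϱ r m ε : ℝ} {h f f' f'' : ℝ → ℝ} {x : ℝ}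

theorem continuousOn (S : IsHJBSolution b σ ϱ r m ε h f f' f'') : ContinuousOn f (Icc 0 b) :=
  fun x hx => (S.1 x hx).continuousWithinAt

theorem continuousOn_deriv (S : IsHJBSolution b σ ϱ r m ε h f f' f'') :
    ContinuousOn f' (Icc 0 b) :=
  fun x hx => (S.2.1 x hx).continuousWithinAt

theorem hasDerivAt (S : IsHJBSolution b σ ϱ r m ε h f f' f'') (hx : x ∈ Ioo 0 b) :
    HasDerivAt f (f' x) x :=
  (S.1 x (Ioo_subset_Icc_self hx)).hasDerivAt (Icc_mem_nhds hx.1 hx.2)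

theorem hasDerivAt_deriv (S : IsHJBSolution b σ ϱ r m ε h f f' f'') (hx : x ∈ Ioo 0 b) :
    HasDerivAt f' (f'' x) x :=
  (S.2.1 x (Ioo_subset_Icc_self hx)).hasDerivAt (Icc_mem_nhds hx.1 hx.2)

theorem deriv_zero (S : IsHJBSolution b σ ϱ r m ε h f f' f'') : f' 0 = 0 := S.2.2.2.2.1

theorem deriv_right_endpoint (S : IsHJBSolution b σ ϱ r m ε h f f' f'') : f' b = r := S.2.2.2.2.2

theorem continuousOn_residual (S : IsHJBSolution b σ ϱ r m ε h f f' f'')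
    (hc : ContinuousOn h (Icc 0 b)) :
    ContinuousOn (hjbResidual σ ϱ m ε h f f' f'') (Icc 0 b) :=
  S.2.2.1.add <| continuousOn_const.mul <|
    (((continuousOn_const.mul S.continuousOn_deriv).add
      (continuousOn_const.mul (S.continuousOn_deriv.pow 2))).sub
        (continuousOn_const.mul S.continuousOn)).add hc

theorem residual_nonneg (S : IsHJBSolution b σ ϱ r m ε h f f' f'') (hb : 0 < b)
    (hc : ContinuousOn h (Icc 0 b)) (hx : x ∈ Icc 0 b) :
    0 ≤ hjbResidual σ ϱ m ε h f f' f'' x :=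
  le_on_Icc_of_le_on_Ioo hb continuousOn_const (S.continuousOn_residual hc)
    (fun y hy => (le_min_iff.1 (le_min_iff.1 (S.2.2.2.1 y hy).ge).1).1) x hx

theorem deriv_nonneg (S : IsHJBSolution b σ ϱ r m ε h f f' f'') (hb : 0 < b)
    (hx : x ∈ Icc 0 b) : 0 ≤ f' x :=
  le_on_Icc_of_le_on_Ioo hb continuousOn_const S.continuousOn_deriv
    (fun y hy => (le_min_iff.1 (le_min_iff.1 (S.2.2.2.1 y hy).ge).1).2) x hx

theorem deriv_le (S : IsHJBSolution b σ ϱ r m ε h f f' f'') (hb : 0 < b)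
    (hx : x ∈ Icc 0 b) : f' x ≤ r :=
  le_on_Icc_of_le_on_Ioo hb S.continuousOn_deriv continuousOn_const
    (fun y hy => sub_nonneg.1 (le_min_iff.1 (S.2.2.2.1 y hy).ge).2) x hx

theorem monotoneOn (S : IsHJBSolution b σ ϱ r m ε h f f' f'') (hb : 0 < b) :
    MonotoneOn f (Icc 0 b) :=
  monotoneOn_of_hasDerivWithinAt_nonneg (convex_Icc 0 b) S.continuousOn
    (fun x hx => (S.1 x (interior_subset hx)).mono interior_subset)
    fun _ hx => S.deriv_nonneg hb (interior_subset hx)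

theorem residual_eq_zero_of_deriv_pos_of_deriv_lt (S : IsHJBSolution b σ ϱ r m ε h f f' f'')
    (hx : x ∈ Ioo 0 b) (hpos : 0 < f' x) (hlt : f' x < r) :
    hjbResidual σ ϱ m ε h f f' f'' x = 0 := by
  have hmin := S.2.2.2.1 x hx
  have hle : 0 ≤ hjbResidual σ ϱ m ε h f f' f'' x := (le_min_iff.1 (le_min_iff.1 hmin.ge).1).1
  refine le_antisymm (not_lt.1 fun hR => hmin.not_gt ?_) hle
  exact lt_min (lt_min hR hpos) (sub_pos.2 hlt)

theorem residual_eq_zero_of_frequently (S : IsHJBSolution b σ ϱ r m ε h f f' f'')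
    (hc : ContinuousOn h (Icc 0 b)) (hx : x ∈ Icc 0 b)
    (hfreq : ∃ᶠ y in 𝓝[Icc 0 b] x, hjbResidual σ ϱ m ε h f f' f'' y = 0) :
    hjbResidual σ ϱ m ε h f f' f'' x = 0 :=
  isClosed_singleton.mem_of_frequently_of_tendsto hfreq (S.continuousOn_residual hc x hx)

theorem lt_of_deriv_lt (S : IsHJBSolution b σ ϱ r m ε h f f' f'') (hx : x ≤ b)
    (hlt : f' x < r) : x < b := by
  refine hx.lt_of_ne ?_
  rintro rfl
  exact hlt.ne S.deriv_right_endpoint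

theorem eventually_deriv_lt (S : IsHJBSolution b σ ϱ r m ε h f f' f'') (hx : x ∈ Icc 0 b)
    (hlt : f' x < r) : ∀ᶠ y in 𝓝[>] x, y ∈ Ioo x b ∧ f' y < r := by
  have hxb : x < b := S.lt_of_deriv_lt hx.2 hlt
  have hcont := (S.continuousOn_deriv x hx).mono_left (nhdsGT_le_nhdsWithin_Icc ⟨hx.1, hxb⟩)
  filter_upwards [Ioo_mem_nhdsGT hxb, hcont.eventually_lt_const hlt] with y hy hy' using ⟨hy, hy'⟩

theorem deriv_deriv_le_of_residual_eq_zero (S : IsHJBSolution b σ ϱ r m ε h f f' f'') (hb : 0 < b)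
    (hmono : MonotoneOn h (Icc 0 b)) {y : ℝ} (hx : x ∈ Icc 0 b) (hy : y ∈ Icc 0 b) (hxy : x ≤ y)
    (hRx : hjbResidual σ ϱ m ε h f f' f'' x = 0) (hRy : hjbResidual σ ϱ m ε h f f' f'' y = 0)
    (hfx : f' x = 0) (hfx' : f'' x = 0) :
    f'' y ≤ 2 / σ ^ 2 * ((|m| + 1 / 2 * σ ^ 2 * |ε| * r) * f' y + |ϱ| * (f y - f x)) := by
  have hH := Hfun_sub_Hfun_le (σ := σ) (ϱ := ϱ) (m := m) (ε := ε) (hmono hx hy hxy)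
    (S.monotoneOn hb hx hy hxy) (S.deriv_nonneg hb hy) (S.deriv_le hb hy)
  rw [hjbResidual, hfx, hfx'] at hRx
  rw [hjbResidual] at hRy
  linarith

-- The Gronwall inequality for `u = f - f x + f'`: by the monotonicity of `h`, the derivative
-- `f' + f''` of `u` is at most a multiple of `u`.
theorem deriv_nonpos_of_residual_eq_zero (S : IsHJBSolution b σ ϱ r m ε h f f' f'')
    (hmono : MonotoneOn h (Icc 0 b)) {d : ℝ} (hx : 0 < x) (hxd : x ≤ d) (hdb : d ≤ b)
    (hR : ∀ y ∈ Icc x d, hjbResidual σ ϱ m ε h f f' f'' y = 0) (hfx : f' x = 0)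
    (hfx' : f'' x = 0) : ∀ y ∈ Icc x d, f' y ≤ 0 := by
  have hb : 0 < b := (hx.trans_le hxd).trans_le hdb
  have hsub : Icc x d ⊆ Icc 0 b := Icc_subset_Icc hx.le hdb
  have hx' : x ∈ Icc x d := left_mem_Icc.2 hxd
  have hle : ∀ y ∈ Icc x d, 0 ≤ f y - f x := fun y hy =>
    sub_nonneg.2 (S.monotoneOn hb (hsub hx') (hsub hy) hy.1)
  have hu_le : ∀ y ∈ Icc x d, f y - f x + f' y ≤ 0 := by
    refine nonpos_of_hasDerivAt_le_mul (u' := fun y => f' y + f'' y)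
      (K := 1 + 2 / σ ^ 2 * (|m| + 1 / 2 * σ ^ 2 * |ε| * r + |ϱ|))
      (((S.continuousOn.mono hsub).sub continuousOn_const).add (S.continuousOn_deriv.mono hsub))
      (fun y hy => ?_) (by rw [sub_self, hfx, zero_add]) fun y hy => ?_
    · have hyb : y ∈ Ioo 0 b := ⟨hx.trans_le hy.1, hy.2.trans_le hdb⟩
      exact ((S.hasDerivAt hyb).sub_const (f x)).add (S.hasDerivAt_deriv hyb)
    · have hy' : y ∈ Icc x d := Ico_subset_Icc_self hy
      have hfy : 0 ≤ f y - f x := hle y hy'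
      have hf'y : 0 ≤ f' y := S.deriv_nonneg hb (hsub hy')
      have hr : 0 ≤ r := hf'y.trans (S.deriv_le hb (hsub hy'))
      have hf''y := S.deriv_deriv_le_of_residual_eq_zero hb hmono (hsub hx') (hsub hy') hy.1
        (hR x hx') (hR y hy') hfx hfx'
      calc f' y + f'' y
          ≤ f' y + (f y - f x) + 2 / σ ^ 2 * ((|m| + 1 / 2 * σ ^ 2 * |ε| * r) *
              (f y - f x + f' y) + |ϱ| * (f y - f x + f' y)) := by
            refine add_le_add (le_add_of_nonneg_right hfy) (hf''y.trans ?_)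
            gcongr <;> linarith
        _ = _ := by ring
  exact fun y hy => by linarith [hu_le y hy, hle y hy]

theorem frequently_deriv_eq_zero (S : IsHJBSolution b σ ϱ r m ε h f f' f'')
    (hc : ContinuousOn h (Icc 0 b)) (hmono : MonotoneOn h (Icc 0 b)) (hr : 0 < r)
    (hx : x ∈ Ioo 0 b) (hfx : f' x = 0) : ∃ᶠ y in 𝓝[>] x, f' y = 0 := by
  have hb : 0 < b := hx.1.trans hx.2
  have hxb : x ∈ Icc 0 b := Ioo_subset_Icc_self hx
  intro hev
  have hpos : ∀ᶠ y in 𝓝[>] x, y ∈ Ioo x b ∧ 0 < f' y ∧ hjbResidual σ ϱ m ε h f f' f'' y = 0 := by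
    filter_upwards [hev, S.eventually_deriv_lt hxb (hfx ▸ hr)] with y hy₀ ⟨hy, hyr⟩
    have hyb : y ∈ Ioo 0 b := ⟨hx.1.trans hy.1, hy.2⟩
    have hy_pos := (S.deriv_nonneg hb (Ioo_subset_Icc_self hyb)).lt_of_ne' hy₀
    exact ⟨hy, hy_pos, S.residual_eq_zero_of_deriv_pos_of_deriv_lt hyb hy_pos hyr⟩
  have hRx : hjbResidual σ ϱ m ε h f f' f'' x = 0 :=
    S.residual_eq_zero_of_frequently hc hxb <|
      (hpos.mono fun _ hy => hy.2.2).frequently.filter_mono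
        (nhdsGT_le_nhdsWithin_Icc ⟨hxb.1, hx.2⟩)
  have hmin : IsLocalMin f' x := by
    filter_upwards [Icc_mem_nhds hx.1 hx.2] with y hy using hfx ▸ S.deriv_nonneg hb hy
  obtain ⟨d, hxd, hsub⟩ := mem_nhdsGT_iff_exists_Ioc_subset.1 hpos
  have hd := hsub ⟨hxd, le_rfl⟩
  have hR : ∀ y ∈ Icc x d, hjbResidual σ ϱ m ε h f f' f'' y = 0 := fun y hy =>
    hy.1.eq_or_lt.elim (fun hxy => hxy ▸ hRx) fun hxy => (hsub ⟨hxy, hy.2⟩).2.2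
  exact hd.2.1.not_ge <| S.deriv_nonpos_of_residual_eq_zero hmono hx.1 hd.1.1.le hd.1.2.le hR hfx
    (hmin.hasDerivAt_eq_zero (S.hasDerivAt_deriv hx)) d (right_mem_Icc.2 hd.1.1.le)

theorem deriv_pos (S : IsHJBSolution b σ ϱ r m ε h f f' f'') (hr : 0 < r)
    (hc : ContinuousOn h (Icc 0 b)) (hmono : MonotoneOn h (Icc 0 b)) (hx : x ∈ Ioc 0 b) :
    0 < f' x := by
  refine (S.deriv_nonneg (hx.1.trans_le hx.2) ⟨hx.1.le, hx.2⟩).lt_of_ne' fun hfx => ?_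
  have hcont : ContinuousOn f' (Icc x b) := S.continuousOn_deriv.mono (Icc_subset_Icc_left hx.1.le)
  obtain ⟨a, ⟨ha, hfa⟩, hlast⟩ : ∃ a, IsGreatest (Icc x b ∩ f' ⁻¹' {0}) a :=
    (isCompact_Icc.of_isClosed_subset (hcont.preimage_isClosed_of_isClosed isClosed_Icc
      isClosed_singleton) inter_subset_left).exists_isGreatest ⟨x, left_mem_Icc.2 hx.2, hfx⟩
  have hab : a < b := S.lt_of_deriv_lt ha.2 (by rwa [hfa])
  obtain ⟨y, hy₀, hy⟩ := ((S.frequently_deriv_eq_zero hc hmono hr ⟨hx.1.trans_le ha.1, hab⟩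
    hfa).and_eventually (Ioo_mem_nhdsGT hab)).exists
  exact hy.1.not_ge (hlast ⟨⟨ha.1.trans hy.1.le, hy.2.le⟩, hy₀⟩)

theorem residual_eq_zero_of_deriv_lt (S : IsHJBSolution b σ ϱ r m ε h f f' f'')
    (hc : ContinuousOn h (Icc 0 b)) (hmono : MonotoneOn h (Icc 0 b)) (hx : x ∈ Icc 0 b)
    (hlt : f' x < r) : hjbResidual σ ϱ m ε h f f' f'' x = 0 := by
  have hxb : x < b := S.lt_of_deriv_lt hx.2 hlt
  have hr : 0 < r := (S.deriv_nonneg (hx.1.trans_lt hxb) hx).trans_lt hlt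
  have hR : ∀ᶠ y in 𝓝[>] x, hjbResidual σ ϱ m ε h f f' f'' y = 0 := by
    filter_upwards [S.eventually_deriv_lt hx hlt] with y ⟨hy, hyr⟩
    have hy₀ : 0 < y := hx.1.trans_lt hy.1
    exact S.residual_eq_zero_of_deriv_pos_of_deriv_lt ⟨hy₀, hy.2⟩
      (S.deriv_pos hr hc hmono ⟨hy₀, hy.2.le⟩) hyr
  exact S.residual_eq_zero_of_frequently hc hx
    (hR.frequently.filter_mono (nhdsGT_le_nhdsWithin_Icc ⟨hx.1, hxb⟩))

theorem minCutoff_le_maxCutoff (S : IsHJBSolution b σ ϱ r m ε h f f' f'') (hb : 0 < b)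
    (hr : 0 < r) (hc : ContinuousOn h (Icc 0 b)) (hmono : MonotoneOn h (Icc 0 b)) :
    minCutoff b r f' ≤ maxCutoff b (hjbResidual σ ϱ m ε h f f' f'') := by
  have hle : minCutoff b r f' ≤ b := minCutoff_le (right_mem_Ioc.2 hb) S.deriv_right_endpoint
  refine le_of_forall_lt_imp_le_of_dense fun x hx => ?_
  rcases le_or_gt x 0 with hx₀ | hx₀
  · exact hx₀.trans maxCutoff_nonneg
  refine le_maxCutoff ⟨hx₀, hx.le.trans hle⟩ fun y hy => ?_
  have hyb : y ∈ Icc 0 b := ⟨hy.1, hy.2.trans (hx.le.trans hle)⟩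
  exact S.residual_eq_zero_of_deriv_lt hc hmono hyb <|
    lt_of_lt_minCutoff (S.deriv_zero.symm ▸ hr) (fun _ hz => S.deriv_le hb hz) hyb
      (hy.2.trans_lt hx)

end Basic

section Comparison

variable {b σ ϱ r m ε₁ ε₂ : ℝ} {h f₁ f₁' f₁'' f₂ f₂' f₂'' : ℝ → ℝ} {x : ℝ}

theorem deriv_eq_deriv_of_isMaxOn (S₁ : IsHJBSolution b σ ϱ r m ε₁ h f₁ f₁' f₁'')
    (S₂ : IsHJBSolution b σ ϱ r m ε₂ h f₂ f₂' f₂'') (hx : x ∈ Icc 0 b)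
    (hmax : IsMaxOn (fun y => f₁ y - f₂ y) (Icc 0 b) x) : f₁' x = f₂' x := by
  rcases hx.1.eq_or_lt with rfl | hx₀
  · rw [S₁.deriv_zero, S₂.deriv_zero]
  rcases hx.2.eq_or_lt with rfl | hxb
  · rw [S₁.deriv_right_endpoint, S₂.deriv_right_endpoint]
  · exact sub_eq_zero.1 <| (hmax.isLocalMax (Icc_mem_nhds hx₀ hxb)).hasDerivAt_eq_zero
      ((S₁.hasDerivAt ⟨hx₀, hxb⟩).sub (S₂.hasDerivAt ⟨hx₀, hxb⟩))

-- Just to the left of the leftmost maximizer, `f₁ - f₂` has to increase at some points, where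
-- `f₂' < f₁' ≤ r` and hence the equation holds for `f₂`; at an arbitrary maximizer with `f₂' = r`
-- the residual of `f₂` could be positive.
theorem residual_eq_zero_and_deriv_deriv_le_of_isLeast_isMaxOn
    (S₁ : IsHJBSolution b σ ϱ r m ε₁ h f₁ f₁' f₁'') (S₂ : IsHJBSolution b σ ϱ r m ε₂ h f₂ f₂' f₂'')
    (hb : 0 < b) (hr : 0 < r) (hc : ContinuousOn h (Icc 0 b)) (hmono : MonotoneOn h (Icc 0 b))
    (hleast : IsLeast {x | x ∈ Icc 0 b ∧ IsMaxOn (fun y => f₁ y - f₂ y) (Icc 0 b) x} x) :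
    hjbResidual σ ϱ m ε₂ h f₂ f₂' f₂'' x = 0 ∧ f₁'' x ≤ f₂'' x := by
  obtain ⟨⟨hx, hmax⟩, hlower⟩ := hleast
  have hderiv : f₁' x = f₂' x := S₁.deriv_eq_deriv_of_isMaxOn S₂ hx hmax
  have hcont : ContinuousOn (fun y => f₁ y - f₂ y) (Icc 0 b) := S₁.continuousOn.sub S₂.continuousOn
  have hderivAt : ∀ y ∈ Ioo 0 b, HasDerivAt (fun y => f₁ y - f₂ y) (f₁' y - f₂' y) y :=
    fun y hy => (S₁.hasDerivAt hy).sub (S₂.hasDerivAt hy)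
  have hderivWithin : HasDerivWithinAt (fun y => f₁' y - f₂' y) (f₁'' x - f₂'' x) (Icc 0 b) x :=
    (S₁.2.1 x hx).sub (S₂.2.1 x hx)
  rcases hx.1.eq_or_lt with rfl | hx₀
  · have hfreq := frequently_nhdsGT_deriv_nonpos hb hcont hderivAt
      fun y hy => hmax (Ioc_subset_Icc_self hy)
    refine ⟨S₂.residual_eq_zero_of_deriv_lt hc hmono hx (S₂.deriv_zero.symm ▸ hr),
      sub_nonpos.1 <| nonpos_of_hasDerivWithinAt_Ioi_of_frequently_le
        (hderivWithin.mono_of_mem_nhdsWithin (Icc_mem_nhdsGT hb)) (hfreq.mono fun y hy => ?_)⟩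
    rwa [hderiv, sub_self]
  · have hlt : ∀ y ∈ Ico 0 x, f₁ y - f₂ y < f₁ x - f₂ x := fun y hy => by
      have hyb : y ∈ Icc 0 b := ⟨hy.1, hy.2.le.trans hx.2⟩
      by_contra! hle
      exact hy.2.not_ge (hlower ⟨hyb, fun z hz => (hmax hz).trans hle⟩)
    have hfreq := frequently_nhdsLT_deriv_pos hx₀ (hcont.mono (Icc_subset_Icc_right hx.2))
      (fun y hy => hderivAt y ⟨hy.1, hy.2.trans_le hx.2⟩) hlt
    have hnhds : 𝓝[<] x ≤ 𝓝[Icc 0 b] x := nhdsLT_le_nhdsWithin_Icc ⟨hx₀, hx.2⟩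
    refine ⟨S₂.residual_eq_zero_of_frequently hc hx <| Frequently.filter_mono
        ((hfreq.and_eventually (hnhds self_mem_nhdsWithin)).mono fun y ⟨hpos, hy⟩ => ?_) hnhds,
      sub_nonpos.1 <| nonpos_of_hasDerivWithinAt_Iio_of_frequently_ge
        (hderivWithin.mono_of_mem_nhdsWithin (hnhds self_mem_nhdsWithin))
        (hfreq.mono fun y hy => ?_)⟩
    · exact S₂.residual_eq_zero_of_deriv_lt hc hmono hy
        ((sub_pos.1 hpos).trans_le (S₁.deriv_le hb hy))
    · rw [hderiv, sub_self]
      exact hy.le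

theorem sub_le (S₁ : IsHJBSolution b σ ϱ r m ε₁ h f₁ f₁' f₁'')
    (S₂ : IsHJBSolution b σ ϱ r m ε₂ h f₂ f₂' f₂'') (hb : 0 < b) (hσ : σ ≠ 0) (hϱ : 0 < ϱ)
    (hr : 0 < r) (hc : ContinuousOn h (Icc 0 b)) (hmono : MonotoneOn h (Icc 0 b)) :
    ∀ x ∈ Icc 0 b, f₁ x - f₂ x ≤ σ ^ 2 * r ^ 2 / (2 * ϱ) * |ε₁ - ε₂| := by
  obtain ⟨c, hleast⟩ := exists_isLeast_isMaxOn isCompact_Icc (nonempty_Icc.2 hb.le)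
    (S₁.continuousOn.sub S₂.continuousOn)
  have hcmem : c ∈ Icc 0 b := hleast.1.1
  obtain ⟨hR₂, hf''⟩ :=
    S₁.residual_eq_zero_and_deriv_deriv_le_of_isLeast_isMaxOn S₂ hb hr hc hmono hleast
  have hf' : f₁' c = f₂' c := S₁.deriv_eq_deriv_of_isMaxOn S₂ hcmem hleast.1.2
  have hH : 0 ≤ Hfun σ ϱ m ε₁ h c (f₁ c) (f₂' c) - Hfun σ ϱ m ε₂ h c (f₂ c) (f₂' c) := by
    have hR₁ := S₁.residual_nonneg hb hc hcmem
    rw [hjbResidual, hf'] at hR₁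
    rw [hjbResidual] at hR₂
    linarith
  rw [Hfun_sub_Hfun hσ, sub_nonneg] at hH
  have hsq : (ε₁ - ε₂) * f₂' c ^ 2 ≤ |ε₁ - ε₂| * r ^ 2 :=
    mul_le_mul (le_abs_self _)
      (pow_le_pow_left₀ (S₂.deriv_nonneg hb hcmem) (S₂.deriv_le hb hcmem) 2) (sq_nonneg _)
      (abs_nonneg _)
  intro x hx
  calc f₁ x - f₂ x ≤ f₁ c - f₂ c := hleast.1.2 hx
    _ = σ ^ 2 / (2 * ϱ) * (2 * ϱ / σ ^ 2 * (f₁ c - f₂ c)) := by field_simp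
    _ ≤ σ ^ 2 / (2 * ϱ) * (|ε₁ - ε₂| * r ^ 2) :=
        mul_le_mul_of_nonneg_left (hH.trans hsq) (by positivity)
    _ = σ ^ 2 * r ^ 2 / (2 * ϱ) * |ε₁ - ε₂| := by ring

end Comparison

section Stability

variable {b σ ϱ r m ε : ℝ} {h f f' f'' : ℝ → ℝ}

theorem abs_deriv_le (S : IsHJBSolution b σ ϱ r m ε h f f' f'') (hb : 0 < b) {x : ℝ}
    (hx : x ∈ Icc 0 b) : |f' x| ≤ r := by
  rw [abs_of_nonneg (S.deriv_nonneg hb hx)]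
  exact S.deriv_le hb hx

theorem abs_deriv_deriv_le (S : IsHJBSolution b σ ϱ r m ε h f f' f'') (hb : 0 < b)
    (hc : ContinuousOn h (Icc 0 b)) (hmono : MonotoneOn h (Icc 0 b)) {M Y A : ℝ} (hε : |ε| ≤ M)
    (hY : ∀ x ∈ Icc 0 b, |f x| ≤ Y) (hA : ∀ x ∈ Icc 0 b, |h x| ≤ A) : ∀ x ∈ Icc 0 b,
      |f'' x| ≤ 2 / σ ^ 2 * (|m| * r + 1 / 2 * σ ^ 2 * M * r ^ 2 + |ϱ| * Y + A) := by
  refine le_on_Icc_of_le_on_Ioo hb S.2.2.1.abs continuousOn_const fun x hx => ?_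
  have hxb : x ∈ Icc 0 b := Ioo_subset_Icc_self hx
  have hH := abs_Hfun_le (σ := σ) (ϱ := ϱ) (m := m) hε (hY x hxb) (S.abs_deriv_le hb hxb)
    (hA x hxb)
  rcases (S.deriv_le hb hxb).lt_or_eq with hlt | heq
  · rwa [eq_neg_of_add_eq_zero_left (S.residual_eq_zero_of_deriv_lt hc hmono hxb hlt), abs_neg]
  · have hmax : IsLocalMax f' x := by
      filter_upwards [Icc_mem_nhds hx.1 hx.2] with y hy using heq ▸ S.deriv_le hb hy
    rw [hmax.hasDerivAt_eq_zero (S.hasDerivAt_deriv hx), abs_zero]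
    exact (abs_nonneg _).trans hH

variable {ι : Type*} {l : Filter ι} {e : ι → ℝ} {F F' F'' : ι → ℝ → ℝ}

theorem tendstoUniformlyOn (S : IsHJBSolution b σ ϱ r m ε h f f' f'') (hb : 0 < b) (hσ : σ ≠ 0)
    (hϱ : 0 < ϱ) (hr : 0 < r) (hc : ContinuousOn h (Icc 0 b)) (hmono : MonotoneOn h (Icc 0 b))
    (he : Tendsto e l (𝓝 ε))
    (T : ∀ᶠ i in l, IsHJBSolution b σ ϱ r m (e i) h (F i) (F' i) (F'' i)) :
    TendstoUniformlyOn F f l (Icc 0 b) := by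
  rw [Metric.tendstoUniformlyOn_iff]
  intro η hη
  have hlim : Tendsto (fun i => σ ^ 2 * r ^ 2 / (2 * ϱ) * |ε - e i|) l (𝓝 0) := by
    simpa only [sub_self, abs_zero, mul_zero] using
      (he.const_sub ε).abs.const_mul (σ ^ 2 * r ^ 2 / (2 * ϱ))
  filter_upwards [T, hlim.eventually_lt_const hη] with i Ti hi x hx
  rw [Real.dist_eq]
  refine (abs_sub_le_iff.2 ⟨S.sub_le Ti hb hσ hϱ hr hc hmono x hx, ?_⟩).trans_lt hi
  rw [abs_sub_comm ε]
  exact Ti.sub_le S hb hσ hϱ hr hc hmono x hx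

theorem tendstoUniformlyOn_deriv (S : IsHJBSolution b σ ϱ r m ε h f f' f'') (hb : 0 < b)
    (hσ : σ ≠ 0) (hϱ : 0 < ϱ) (hr : 0 < r) (hc : ContinuousOn h (Icc 0 b))
    (hmono : MonotoneOn h (Icc 0 b)) (he : Tendsto e l (𝓝 ε))
    (T : ∀ᶠ i in l, IsHJBSolution b σ ϱ r m (e i) h (F i) (F' i) (F'' i)) :
    TendstoUniformlyOn F' f' l (Icc 0 b) := by
  have hlim : TendstoUniformlyOn F f l (Icc 0 b) :=
    S.tendstoUniformlyOn hb hσ hϱ hr hc hmono he T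
  obtain ⟨Y, hY⟩ := isCompact_Icc.exists_bound_of_continuousOn S.continuousOn
  obtain ⟨A, hA⟩ := isCompact_Icc.exists_bound_of_continuousOn hc
  obtain ⟨C, hC⟩ := isCompact_Icc.exists_bound_of_continuousOn S.2.2.1
  have hF_le : ∀ᶠ i in l, ∀ x ∈ Icc 0 b, |F i x| ≤ Y + 1 := by
    filter_upwards [Metric.tendstoUniformlyOn_iff.1 hlim 1 one_pos] with i hi x hx
    calc |F i x| ≤ |f x| + dist (f x) (F i x) := by
          rw [dist_comm, Real.dist_eq]
          exact sub_le_iff_le_add'.1 (abs_sub_abs_le_abs_sub _ _)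
      _ ≤ Y + 1 := add_le_add (hY x hx) (hi x hx).le
  have hF''_le : ∀ᶠ i in l, ∀ x ∈ Icc 0 b, ‖F'' i x‖ ≤
      2 / σ ^ 2 * (|m| * r + 1 / 2 * σ ^ 2 * (|ε| + 1) * r ^ 2 + |ϱ| * (Y + 1) + A) := by
    filter_upwards [T, he.abs.eventually_le_const (lt_add_one |ε|), hF_le] with i Ti hei hi
    exact Ti.abs_deriv_deriv_le hb hc hmono hei hi hA
  exact tendstoUniformlyOn_deriv_of_norm_deriv_deriv_le hb (T.mono fun _ Ti => Ti.1)
    (T.mono fun _ Ti => Ti.2.1) S.1 S.2.1 hF''_le hC hlim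

theorem residual_eq_zero_of_tendstoUniformlyOn [l.NeBot]
    (S : IsHJBSolution b σ ϱ r m ε h f f' f'') (he : Tendsto e l (𝓝 ε))
    (T : ∀ᶠ i in l, IsHJBSolution b σ ϱ r m (e i) h (F i) (F' i) (F'' i))
    (hF : TendstoUniformlyOn F f l (Icc 0 b)) (hF' : TendstoUniformlyOn F' f' l (Icc 0 b))
    {s : Set ℝ} (hs : IsOpen s) (hsb : s ⊆ Ioo 0 b)
    (hR : ∀ᶠ i in l, ∀ x ∈ s, hjbResidual σ ϱ m (e i) h (F i) (F' i) (F'' i) x = 0) :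
    ∀ x ∈ s, hjbResidual σ ϱ m ε h f f' f'' x = 0 := by
  have hsub : s ⊆ Icc 0 b := hsb.trans Ioo_subset_Icc_self
  have hH : TendstoUniformlyOn (fun i x => Hfun σ ϱ m (e i) h x (F i x) (F' i x))
      (fun x => Hfun σ ϱ m ε h x (f x) (f' x)) l (Icc 0 b) :=
    tendstoUniformlyOn_Hfun isCompact_Icc he S.continuousOn_deriv hF hF'
  have hderiv : ∀ᶠ i in l, ∀ x ∈ s,
      HasDerivAt (F' i) (-Hfun σ ϱ m (e i) h x (F i x) (F' i x)) x := by
    filter_upwards [T, hR] with i Ti hi x hx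
    rw [← eq_neg_of_add_eq_zero_left (hi x hx)]
    exact Ti.hasDerivAt_deriv (hsb hx)
  intro x hx
  have hlim : HasDerivAt f' (-Hfun σ ϱ m ε h x (f x) (f' x)) x :=
    hasDerivAt_of_tendstoUniformlyOn hs (hH.mono hsub).neg hderiv
      (fun y hy => hF'.tendsto_at (hsub hy)) hx
  exact eq_neg_iff_add_eq_zero.1 ((S.hasDerivAt_deriv (hsb hx)).unique hlim)

theorem eventually_maxCutoff_lt (S : IsHJBSolution b σ ϱ r m ε h f f' f'') (hb : 0 < b)
    (hσ : σ ≠ 0) (hϱ : 0 < ϱ) (hr : 0 < r) (hc : ContinuousOn h (Icc 0 b))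
    (hmono : MonotoneOn h (Icc 0 b)) (he : Tendsto e l (𝓝 ε))
    (T : ∀ᶠ i in l, IsHJBSolution b σ ϱ r m (e i) h (F i) (F' i) (F'' i))
    {a : ℝ} (ha : maxCutoff b (hjbResidual σ ϱ m ε h f f' f'') < a) :
    ∀ᶠ i in l, maxCutoff b (hjbResidual σ ϱ m (e i) h (F i) (F' i) (F'' i)) < a := by
  by_contra! hfreq
  have ha₀ : 0 < a := maxCutoff_nonneg.trans_lt ha
  have hab : a ≤ b := hfreq.exists.choose_spec.trans (maxCutoff_le hb.le)
  let l' := l ⊓ 𝓟 {i | a ≤ maxCutoff b (hjbResidual σ ϱ m (e i) h (F i) (F' i) (F'' i))}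
  have hl : l' ≤ l := inf_le_left
  have : l'.NeBot := frequently_mem_iff_neBot.1 hfreq
  have hR : ∀ᶠ i in l', ∀ x ∈ Ioo 0 a,
      hjbResidual σ ϱ m (e i) h (F i) (F' i) (F'' i) x = 0 := by
    filter_upwards [mem_inf_of_right (mem_principal_self _)] with i hi x hx
    exact eq_zero_of_lt_maxCutoff hx.1.le (hx.2.trans_le hi)
  have hF := S.tendstoUniformlyOn hb hσ hϱ hr hc hmono (he.mono_left hl) (hl T)
  have hF' := S.tendstoUniformlyOn_deriv hb hσ hϱ hr hc hmono (he.mono_left hl) (hl T)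
  have hzero : EqOn (hjbResidual σ ϱ m ε h f f' f'') 0 (Ioo 0 a) :=
    S.residual_eq_zero_of_tendstoUniformlyOn (he.mono_left hl) (hl T) hF hF' isOpen_Ioo
      (Ioo_subset_Ioo_right hab) hR
  have hzero' : EqOn (hjbResidual σ ϱ m ε h f f' f'') 0 (Icc 0 a) :=
    hzero.of_subset_closure ((S.continuousOn_residual hc).mono (Icc_subset_Icc_right hab))
      continuousOn_const Ioo_subset_Icc_self (closure_Ioo ha₀.ne).ge
  exact ha.not_ge (le_maxCutoff ⟨ha₀, hab⟩ hzero')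

end Stability

end IsHJBSolution

theorem stmt19_general {ι : Type*} {l : Filter ι} [l.NeBot] {b σ ϱ r m ε : ℝ} {e : ι → ℝ}
    {h f f' f'' : ℝ → ℝ} {F F' F'' : ι → ℝ → ℝ} (hb : 0 < b) (hσ : σ ≠ 0) (hϱ : 0 < ϱ)
    (hr : 0 < r) (hc : ContinuousOn h (Icc 0 b)) (hmono : MonotoneOn h (Icc 0 b))
    (S : IsHJBSolution b σ ϱ r m ε h f f' f'') (he : Tendsto e l (𝓝 ε))
    (T : ∀ᶠ i in l, IsHJBSolution b σ ϱ r m (e i) h (F i) (F' i) (F'' i)) :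
    (minCutoff b r f' ≤ liminf (fun i => minCutoff b r (F' i)) l ∧
      liminf (fun i => minCutoff b r (F' i)) l ≤
        limsup (fun i => maxCutoff b (hjbResidual σ ϱ m (e i) h (F i) (F' i) (F'' i))) l ∧
      limsup (fun i => maxCutoff b (hjbResidual σ ϱ m (e i) h (F i) (F' i) (F'' i))) l ≤
        maxCutoff b (hjbResidual σ ϱ m ε h f f' f'')) ∧
    (minCutoff b r f' = maxCutoff b (hjbResidual σ ϱ m ε h f f' f'') →
      Tendsto (fun i => minCutoff b r (F' i)) l
        (𝓝 (maxCutoff b (hjbResidual σ ϱ m ε h f f' f''))) ∧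
      Tendsto (fun i => maxCutoff b (hjbResidual σ ϱ m (e i) h (F i) (F' i) (F'' i))) l
        (𝓝 (maxCutoff b (hjbResidual σ ϱ m ε h f f' f'')))) := by
  have hF' := S.tendstoUniformlyOn_deriv hb hσ hϱ hr hc hmono he T
  have hlower : ∀ a < minCutoff b r f', ∀ᶠ i in l, a < minCutoff b r (F' i) := fun _ =>
    eventually_lt_minCutoff hb S.continuousOn_deriv (S.deriv_zero.symm ▸ hr)
      S.deriv_right_endpoint (fun _ hy => S.deriv_le hb hy)
      (T.mono fun _ Ti => Ti.deriv_right_endpoint) hF'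
  have hupper := fun a => S.eventually_maxCutoff_lt (a := a) hb hσ hϱ hr hc hmono he T
  have hle := T.mono fun _ Ti => Ti.minCutoff_le_maxCutoff hb hr hc hmono
  refine ⟨le_liminf_and_liminf_le_limsup_and_limsup_le hlower hupper hle, fun heq => ?_⟩
  exact tendsto_and_tendsto_of_eventually_le (heq ▸ hlower) hupper hle

/-- For every ε ∈ [0,∞):
β_ε ≤ liminf_{δ→0} β_{ε+δ} ≤ limsup_{δ→0} β̂_{ε+δ} ≤ β̂_ε (δ → 0 through values with
ε + δ ≥ 0). Consequently, if β_ε = β̂_ε then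
lim_{δ→0} β_{ε+δ} = lim_{δ→0} β̂_{ε+δ} = β̂_ε. -/
theorem stmt19 (b σ ϱ r m : ℝ) (hb : 0 < b) (hσ : 0 < σ) (hϱ : 0 < ϱ) (hr : 0 < r)
    (h : ℝ → ℝ)
    (hLip : ∃ K : NNReal, LipschitzOnWith K h (Icc (0:ℝ) b))
    (hconv : ConvexOn ℝ (Icc (0:ℝ) b) h)
    (hmono : StrictMonoOn h (Icc (0:ℝ) b)) (h0 : h 0 = 0)
    (f f' f'' : ℝ → ℝ → ℝ)
    (hsol : ∀ ε : ℝ, 0 ≤ ε → IsHJBSolution b σ ϱ r m ε h (f ε) (f' ε) (f'' ε))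
    (β βhat : ℝ → ℝ)
    (hβ : ∀ ε : ℝ, β ε = sInf {x : ℝ | x ∈ Ioc (0:ℝ) b ∧ f' ε x = r})
    (hβhat : ∀ ε : ℝ, βhat ε = sSup {x : ℝ | x ∈ Ioc (0:ℝ) b ∧
      ∀ y ∈ Icc (0:ℝ) x, f'' ε y + Hfun σ ϱ m ε h y (f ε y) (f' ε y) = 0}) :
    ∀ ε : ℝ, 0 ≤ ε →
      (β ε ≤ liminf (fun δ => β (ε + δ)) (𝓝[Ici (-ε)] 0) ∧
        liminf (fun δ => β (ε + δ)) (𝓝[Ici (-ε)] 0) ≤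
          limsup (fun δ => βhat (ε + δ)) (𝓝[Ici (-ε)] 0) ∧
        limsup (fun δ => βhat (ε + δ)) (𝓝[Ici (-ε)] 0) ≤ βhat ε) ∧
      (β ε = βhat ε →
        Tendsto (fun δ => β (ε + δ)) (𝓝[Ici (-ε)] 0) (𝓝 (βhat ε)) ∧
        Tendsto (fun δ => βhat (ε + δ)) (𝓝[Ici (-ε)] 0) (𝓝 (βhat ε))) := by
  obtain rfl : β = fun ε => minCutoff b r (f' ε) := funext hβ
  obtain rfl : βhat = fun ε => maxCutoff b (hjbResidual σ ϱ m ε h (f ε) (f' ε) (f'' ε)) :=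
    funext hβhat
  intro ε hε
  have : (𝓝[Ici (-ε)] (0 : ℝ)).NeBot := nhdsWithin_neBot_of_mem (neg_nonpos.2 hε)
  have hadd : Tendsto (fun δ => ε + δ) (𝓝[Ici (-ε)] 0) (𝓝 ε) :=
    ((continuous_const_add ε).tendsto' 0 ε (add_zero ε)).mono_left nhdsWithin_le_nhds
  exact stmt19_general hb hσ.ne' hϱ hr hLip.choose_spec.continuousOn hmono.monotoneOn (hsol ε hε)
    hadd (eventually_mem_nhdsWithin.mono fun δ hδ => hsol (ε + δ) (neg_le_iff_add_nonneg'.1 hδ))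
end
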